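/- Let G be a 3-connected cubic graph on n vertices with a distinguished root vertex r ∈ V(G). If every peripheral cycle of G has length at most q, then the graph G − r has at least 2^{n/(2q)} decompositions of its edge set into (the edge set of) a spanning tree and a 2-base. -/

import Mathlib

open scoped Classical

/-- A multigraph with an orientation: each edge `e` has a source `src e` and a target `tgt e`.
Loops and parallel edges are allowed. -/
structure Multigraph (V E : Type) where
  src : E → V
  tgt : E → V

namespace Multigraph

variable {V E : Type}

/-- `u` and `v` are joined by some edge satisfying the predicate `P`. -/
def adjVia (G : Multigraph V E) (P : E → Prop) (u v : V) : Prop :=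
  ∃ e, P e ∧ ((G.src e = u ∧ G.tgt e = v) ∨ (G.src e = v ∧ G.tgt e = u))

/-- `v` is reachable from `u` using only edges satisfying `P`. -/
def Reaches (G : Multigraph V E) (P : E → Prop) : V → V → Prop :=
  Relation.ReflTransGen (G.adjVia P)

/-- The graph is connected when only edges satisfying `P` are kept (all edges deleted
whose predicate fails, all vertices kept). -/
def ConnectedVia (G : Multigraph V E) (P : E → Prop) : Prop :=
  Nonempty V ∧ ∀ u v : V, G.Reaches P u v

def Connected (G : Multigraph V E) : Prop :=
  G.ConnectedVia fun _ => True

/-- `G` is `k`-edge-connected: it is connected and has no edge cut of size less than `k`;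
equivalently, deleting any set of fewer than `k` edges leaves it connected. -/
def EdgeConnected (G : Multigraph V E) (k : ℕ) : Prop :=
  ∀ S : Set E, S.ncard < k → G.ConnectedVia fun e => e ∉ S

/-- The degree of a vertex (loops counted twice). -/
noncomputable def degree (G : Multigraph V E) (v : V) : ℕ :=
  {e | G.src e = v}.ncard + {e | G.tgt e = v}.ncard

/-- Every vertex has degree exactly 3. -/
def Cubic (G : Multigraph V E) : Prop :=
  ∀ v : V, G.degree v = 3

/-- `φ : E → Γ` is a flow: at every vertex, the sum over outgoing edges equals the
sum over incoming edges. -/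
def IsFlow [Fintype E] {Γ : Type} [AddCommGroup Γ] (G : Multigraph V E) (φ : E → Γ) : Prop :=
  ∀ v : V, (∑ e : E, if G.src e = v then φ e else 0) = ∑ e : E, if G.tgt e = v then φ e else 0

/-- The vertex `v` is an endpoint of some edge of `C`. -/
def touches (G : Multigraph V E) (C : Set E) (v : V) : Prop :=
  ∃ e ∈ C, G.src e = v ∨ G.tgt e = v

/-- An edge set `C` is (the edge set of) a cycle: it is nonempty, every vertex it touches
has degree exactly 2 in it, and it is connected. -/
def IsCycle (G : Multigraph V E) (C : Set E) : Prop :=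
  C.Nonempty ∧
  (∀ v : V, G.touches C v →
    ({e ∈ C | G.src e = v}.ncard + {e ∈ C | G.tgt e = v}.ncard = 2)) ∧
  (∀ u v : V, G.touches C u → G.touches C v → G.Reaches (· ∈ C) u v)

/-- `R` is `k`-closed: every cycle with at least one edge outside `R` has at least
`k+1` edges outside `R`. -/
def Closed (G : Multigraph V E) (k : ℕ) (R : Set E) : Prop :=
  ∀ C : Set E, G.IsCycle C → (C \ R).Nonempty → k + 1 ≤ (C \ R).ncard

/-- The `k`-closure `⟨S⟩ₖ` of `S` : the minimal `k`-closed set containing `S`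
(the family of `k`-closed sets is closed under intersections). -/
def kClosure (G : Multigraph V E) (k : ℕ) (S : Set E) : Set E :=
  ⋂₀ {R : Set E | S ⊆ R ∧ G.Closed k R}

/-- `S` is a `k`-base: its `k`-closure is the whole edge set. -/
def IsBase (G : Multigraph V E) (k : ℕ) (S : Set E) : Prop :=
  G.kClosure k S = Set.univ

/-- An edge set `S` is peripheral if `G − S` is connected. -/
def Peripheral (G : Multigraph V E) (S : Set E) : Prop :=
  G.ConnectedVia fun e => e ∉ S

/-- The spanning subgraph `(V, F)` is a forest, i.e. contains no cycle. -/
def IsForest (G : Multigraph V E) (F : Set E) : Prop :=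
  ∀ C : Set E, G.IsCycle C → ¬ C ⊆ F

/-- `vs`, `es` describe a path: distinct vertices `vs 0, …, vs n` and distinct edges
`es 0, …, es (n-1)` where `es i` joins `vs i` and `vs (i+1)`. -/
def IsPath (G : Multigraph V E) {n : ℕ} (vs : Fin (n + 1) → V) (es : Fin n → E) : Prop :=
  Function.Injective vs ∧ Function.Injective es ∧
  ∀ i : Fin n,
    (G.src (es i) = vs i.castSucc ∧ G.tgt (es i) = vs i.succ) ∨
    (G.src (es i) = vs i.succ ∧ G.tgt (es i) = vs i.castSucc)

/-- The edge `e` has `y` as one endpoint and its other endpoint in `X`,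
i.e. `e ∈ E(y, X)`. -/
def joins (G : Multigraph V E) (e : E) (y : V) (X : Set V) : Prop :=
  (G.src e = y ∧ G.tgt e ∈ X) ∨ (G.tgt e = y ∧ G.src e ∈ X)

/-- `W` is the vertex set of a connected component of `G − X`. -/
def IsComponent (G : Multigraph V E) (X W : Set V) : Prop :=
  W.Nonempty ∧ Disjoint W X ∧
  (∀ u ∈ W, ∀ v : V, v ∉ X → G.adjVia (fun _ => True) u v → v ∈ W) ∧
  (∀ u ∈ W, ∀ v ∈ W, G.Reaches (fun e => G.src e ∉ X ∧ G.tgt e ∉ X) u v)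

/-- The subgraph induced on `W`, with only those of its edges satisfying `P` kept,
is connected. -/
def ConnectedOn (G : Multigraph V E) (W : Set V) (P : E → Prop) : Prop :=
  ∀ u ∈ W, ∀ v ∈ W, G.Reaches (fun e => P e ∧ G.src e ∈ W ∧ G.tgt e ∈ W) u v

/-- The subgraph induced on `W` is `k`-edge-connected. -/
def EdgeConnectedOn (G : Multigraph V E) (W : Set V) (k : ℕ) : Prop :=
  ∀ S : Set E, S.ncard < k → G.ConnectedOn W fun e => e ∉ S

/-- Some cycle lies entirely inside the vertex set `X`. -/
def HasCycleIn (G : Multigraph V E) (X : Set V) : Prop :=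
  ∃ C : Set E, G.IsCycle C ∧ ∀ e ∈ C, G.src e ∈ X ∧ G.tgt e ∈ X

/-- The edge cut `E(X, V \ X)`. -/
def cutEdges (G : Multigraph V E) (X : Set V) : Set E :=
  {e | (G.src e ∈ X ∧ G.tgt e ∉ X) ∨ (G.src e ∉ X ∧ G.tgt e ∈ X)}

/-- A cubic graph is cyclically `k`-edge-connected if every edge cut separating two
cycle-containing parts has at least `k` edges. -/
def CyclicallyEdgeConnected (G : Multigraph V E) (k : ℕ) : Prop :=
  ∀ X : Set V, G.HasCycleIn X → G.HasCycleIn Xᶜ → k ≤ (G.cutEdges X).ncard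

/-- `G` is 3-connected: more than 3 vertices, connected, and still connected after
deleting any two vertices. -/
def ThreeConnected [Fintype V] (G : Multigraph V E) : Prop :=
  3 < Fintype.card V ∧ G.Connected ∧
    ∀ u v : V, G.ConnectedOn {w : V | w ≠ u ∧ w ≠ v} fun _ => True

/-- The graph `G − r` obtained by deleting the vertex `r` and all incident edges. -/
def deleteVertex (G : Multigraph V E) (r : V) :
    Multigraph {v : V // v ≠ r} {e : E // G.src e ≠ r ∧ G.tgt e ≠ r} where
  src e := ⟨G.src e.1, e.2.1⟩
  tgt e := ⟨G.tgt e.1, e.2.2⟩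

end Multigraph

namespace Multigraph

variable {V E : Type} {G : Multigraph V E}

/-- The edges with both endpoints in `S`. -/
def inside (G : Multigraph V E) (S : Set V) : Set E :=
  {e | G.src e ∈ S ∧ G.tgt e ∈ S}

/-- The edges with one endpoint in `A` and the other one in `B`. -/
def between (G : Multigraph V E) (A B : Set V) : Set E :=
  {e | (G.src e ∈ A ∧ G.tgt e ∈ B) ∨ (G.src e ∈ B ∧ G.tgt e ∈ A)}

/-- Some endpoint of `e` lies in `S`. -/
def Meets (G : Multigraph V E) (e : E) (S : Set V) : Prop :=
  G.src e ∈ S ∨ G.tgt e ∈ S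

/-- `S` cannot be split into two nonempty parts without an edge of `P` between them. -/
def LinkedBy (G : Multigraph V E) (P : Set E) (S : Set V) : Prop :=
  ∀ A ⊆ S, A.Nonempty → (S \ A).Nonempty → ∃ e ∈ P, e ∈ G.between A (S \ A)

/-- The subgraph induced on `S` is connected (or empty). -/
abbrev Linked (G : Multigraph V E) (S : Set V) : Prop := G.LinkedBy Set.univ S

theorem mem_inside {S : Set V} {e : E} : e ∈ G.inside S ↔ G.src e ∈ S ∧ G.tgt e ∈ S := Iff.rfl

theorem mem_between {A B : Set V} {e : E} : e ∈ G.between A B ↔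
    (G.src e ∈ A ∧ G.tgt e ∈ B) ∨ (G.src e ∈ B ∧ G.tgt e ∈ A) := Iff.rfl

theorem mem_cutEdges {S : Set V} {e : E} : e ∈ G.cutEdges S ↔
    (G.src e ∈ S ∧ G.tgt e ∉ S) ∨ (G.src e ∉ S ∧ G.tgt e ∈ S) := Iff.rfl

theorem cutEdges_compl (S : Set V) : G.cutEdges Sᶜ = G.cutEdges S := by
  ext e; simp only [mem_cutEdges, Set.mem_compl_iff]; tauto

theorem between_comm (A B : Set V) : G.between A B = G.between B A := by
  ext e; simp only [mem_between]; tauto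

theorem LinkedBy.mono {P P' : Set E} {S : Set V} (h : G.LinkedBy P S) (hP : P ⊆ P') :
    G.LinkedBy P' S := fun A hA h1 h2 =>
  let ⟨e, he, hb⟩ := h A hA h1 h2
  ⟨e, hP he, hb⟩

theorem LinkedBy.inter_inside {P : Set E} {S : Set V} (h : G.LinkedBy P S) :
    G.LinkedBy (P ∩ G.inside S) S := by
  intro A hA h1 h2
  obtain ⟨e, he, hb⟩ := h A hA h1 h2
  refine ⟨e, ⟨he, ?_⟩, hb⟩
  simp only [mem_between, mem_inside, Set.mem_sdiff] at *
  grind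

theorem linkedBy_empty (P : Set E) : G.LinkedBy P ∅ := by
  intro A hA h1 h2; simp at h2

theorem linkedBy_singleton (P : Set E) (v : V) : G.LinkedBy P {v} := by
  intro A hA ⟨a, ha⟩ ⟨b, hb, hb'⟩
  have := hA ha
  simp at this hb
  grind

/-- To split a set into two parts we may decide which part a linked subset lies in. -/
theorem LinkedBy.of_subset {P : Set E} {S K : Set V} (hK : G.LinkedBy P K) (hKS : K ⊆ S)
    (h : ∀ A ⊆ S \ K, A.Nonempty → ∃ e ∈ P, e ∈ G.between A (S \ A)) : G.LinkedBy P S := by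
  intro A hA h1 h2
  by_cases hAK : (A ∩ K).Nonempty
  · by_cases hAK' : (K \ A).Nonempty
    · obtain ⟨e, he, hb⟩ := hK (A ∩ K) Set.inter_subset_right hAK (by
        obtain ⟨x, hx⟩ := hAK'
        exact ⟨x, hx.1, fun h => hx.2 h.1⟩)
      refine ⟨e, he, ?_⟩
      simp only [mem_between, Set.mem_sdiff, Set.mem_inter_iff] at *
      grind
    · obtain ⟨e, he, hb⟩ := h (S \ A) (by
        intro x hx
        exact ⟨hx.1, fun hxK => hAK' ⟨x, hxK, hx.2⟩⟩) h2
      refine ⟨e, he, ?_⟩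
      simp only [mem_between, Set.mem_sdiff] at *
      grind
  · exact h A (fun x hx => ⟨hA hx, fun hxK => hAK ⟨x, hx, hxK⟩⟩) h1

theorem LinkedBy.union {P : Set E} {A B : Set V} {e : E} (hA : G.LinkedBy P A)
    (hB : G.LinkedBy P B) (he : e ∈ P) (hb : e ∈ G.between A B) :
    G.LinkedBy P (A ∪ B) := by
  refine hA.of_subset Set.subset_union_left ?_
  · intro C hC hCne
    by_cases hCB : (B \ C).Nonempty
    · obtain ⟨f, hf, hfb⟩ := hB C (fun x hx => (hC hx).1.resolve_left (hC hx).2) hCne hCB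
      refine ⟨f, hf, ?_⟩
      simp only [mem_between, Set.mem_sdiff, Set.mem_union] at *
      grind
    · refine ⟨e, he, ?_⟩
      have hBC : ∀ x ∈ B, x ∈ C := fun x hx => by
        by_contra h; exact hCB ⟨x, hx, h⟩
      have hCA : ∀ x ∈ C, x ∉ A := fun x hx => (hC hx).2
      simp only [mem_between, Set.mem_sdiff, Set.mem_union] at *
      grind

theorem LinkedBy.insert {P : Set E} {A : Set V} {v : V} {e : E} (hA : G.LinkedBy P A)
    (he : e ∈ P) (hb : e ∈ G.between {v} A) : G.LinkedBy P (insert v A) := by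
  rw [Set.insert_eq]
  exact (linkedBy_singleton P v).union hA he hb

/-- Removing from a linked set a part which is not adjacent to the rest outside `K`. -/
theorem LinkedBy.diff {P : Set E} {S K C : Set V} (hS : G.LinkedBy P S) (hK : G.LinkedBy P K)
    (hKS : K ⊆ S) (hne : K.Nonempty) (hCK : C ⊆ S \ K)
    (hC : ∀ e ∈ G.between C ((S \ K) \ C), e ∉ P) : G.LinkedBy P (S \ C) := by
  refine hK.of_subset (fun x hx => ⟨hKS hx, fun h => (hCK h).2 hx⟩) ?_
  intro A hA hAne
  obtain ⟨k, hk⟩ := hne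
  obtain ⟨e, he, hb⟩ := hS A (fun x hx => (hA hx).1.1) hAne
    ⟨k, hKS hk, fun h => (hA h).2 hk⟩
  refine ⟨e, he, ?_⟩
  have := hC e
  have hA' : ∀ x ∈ A, x ∈ S ∧ x ∉ C ∧ x ∉ K := fun x hx => ⟨(hA hx).1.1, (hA hx).1.2, (hA hx).2⟩
  simp only [mem_between, Set.mem_sdiff] at *
  grind

/-- A linked set meeting a set `C` with no edge leaving it inside `S` is contained in `C`. -/
theorem LinkedBy.subset_of_meets {P : Set E} {S C Z : Set V} (hZ : G.LinkedBy P Z) (hZS : Z ⊆ S)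
    (hC : ∀ e ∈ G.between C (S \ C), e ∉ P) (hne : (Z ∩ C).Nonempty) : Z ⊆ C := by
  by_contra hcon
  obtain ⟨z, hz, hzC⟩ := Set.not_subset.1 hcon
  obtain ⟨e, he, hb⟩ := hZ (Z ∩ C) Set.inter_subset_left hne ⟨z, hz, fun h => hzC h.2⟩
  refine hC e ?_ he
  have : ∀ x ∈ Z, x ∈ S := hZS
  simp only [mem_between, Set.mem_sdiff, Set.mem_inter_iff] at *
  grind

theorem exists_component [Finite V] {P : Set E} {S A : Set V} (hA : G.LinkedBy P A) (hAS : A ⊆ S) :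
    ∃ C, A ⊆ C ∧ C ⊆ S ∧ G.LinkedBy P C ∧ ∀ e ∈ G.between C (S \ C), e ∉ P := by
  obtain ⟨C, hAC, hC⟩ := (Set.toFinite {C : Set V | A ⊆ C ∧ C ⊆ S ∧ G.LinkedBy P C}).exists_le_maximal
    (show A ∈ _ from ⟨subset_rfl, hAS, hA⟩)
  obtain ⟨⟨h1, h2, h3⟩, hmax⟩ := hC
  refine ⟨C, h1, h2, h3, fun e he heP => ?_⟩
  have key : ∀ v, v ∈ S → v ∉ C → e ∈ G.between {v} C → False := by
    intro v hv hvC hb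
    exact hvC (hmax (y := insert v C) ⟨h1.trans (Set.subset_insert _ _),
      Set.insert_subset hv h2, h3.insert heP hb⟩ (Set.subset_insert _ _) (Set.mem_insert _ _))
  rcases he with ⟨h4, h5⟩ | ⟨h4, h5⟩
  · exact key _ h5.1 h5.2 (Or.inr ⟨h4, rfl⟩)
  · exact key _ h4.1 h4.2 (Or.inl ⟨rfl, h5⟩)

theorem LinkedBy.reaches {P : Set E} {S : Set V} (h : G.LinkedBy P S) {u v : V} (hu : u ∈ S)
    (hv : v ∈ S) : G.Reaches (· ∈ P) u v := by
  by_contra hcon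
  obtain ⟨e, he, hb⟩ := h {x | x ∈ S ∧ G.Reaches (· ∈ P) u x} (fun x hx => hx.1)
    ⟨u, hu, Relation.ReflTransGen.refl⟩ ⟨v, hv, fun h => hcon h.2⟩
  rcases hb with ⟨⟨h1, h2⟩, h3, h4⟩ | ⟨⟨h3, h4⟩, h1, h2⟩
  · exact h4 ⟨h3, h2.tail ⟨e, he, Or.inl ⟨rfl, rfl⟩⟩⟩
  · exact h4 ⟨h3, h2.tail ⟨e, he, Or.inr ⟨rfl, rfl⟩⟩⟩

/-- Reachability along edges none of which leaves `A` stays in `A`. -/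
theorem Reaches.mem_of_forall {P : E → Prop} {A : Set V} {u v : V} (h : G.Reaches P u v)
    (hA : ∀ e, P e → e ∉ G.cutEdges A) (hu : u ∈ A) : v ∈ A := by
  induction h with
  | refl => exact hu
  | tail _ hbc ih =>
    obtain ⟨e, he, h | h⟩ := hbc
    · have := hA e he
      simp only [mem_cutEdges] at this
      grind
    · have := hA e he
      simp only [mem_cutEdges] at this
      grind

/-- Loopless cubic graphs all of whose edge cuts have at least three edges. -/
structure IsCubicThreeEdgeConnected (G : Multigraph V E) : Prop where
  src_ne_tgt : ∀ e, G.src e ≠ G.tgt e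
  ncard_incident : ∀ v, {e | G.src e = v ∨ G.tgt e = v}.ncard = 3
  three_le_cut : ∀ S : Set V, S.Nonempty → Sᶜ.Nonempty → 3 ≤ (G.cutEdges S).ncard

namespace IsCubicThreeEdgeConnected

theorem eq_or_eq_or_eq [Finite E] (hG : G.IsCubicThreeEdgeConnected) {v : V} {a b c d : E}
    (ha : G.src a = v ∨ G.tgt a = v) (hb : G.src b = v ∨ G.tgt b = v)
    (hc : G.src c = v ∨ G.tgt c = v) (hd : G.src d = v ∨ G.tgt d = v)
    (hab : a ≠ b) (hac : a ≠ c) (hbc : b ≠ c) : d = a ∨ d = b ∨ d = c := by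
  by_contra! h
  have h1 := hG.ncard_incident v
  have h2 : ({d, a, b, c} : Set E) ⊆ {e | G.src e = v ∨ G.tgt e = v} := by
    rintro x (rfl | rfl | rfl | rfl) <;> assumption
  have h3 := Set.ncard_le_ncard h2
  rw [Set.ncard_insert_of_notMem (by simp; tauto), Set.ncard_insert_of_notMem (by simp; tauto),
    Set.ncard_pair hbc] at h3
  omega

theorem exists_third [Finite E] (hG : G.IsCubicThreeEdgeConnected) (v : V) (a b : E) :
    ∃ c, (G.src c = v ∨ G.tgt c = v) ∧ c ≠ a ∧ c ≠ b := by
  by_contra! h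
  have h1 := hG.ncard_incident v
  have h2 : {e | G.src e = v ∨ G.tgt e = v} ⊆ {a, b} := by
    intro x hx
    by_cases hxa : x = a
    · exact Or.inl hxa
    · exact Or.inr (h x hx hxa)
  have h3 := Set.ncard_le_ncard h2
  have := Set.ncard_insert_le a {b}
  simp only [Set.ncard_singleton] at this
  omega

theorem not_cut_subset_pair [Finite E] (hG : G.IsCubicThreeEdgeConnected) {S : Set V}
    (h1 : S.Nonempty) (h2 : Sᶜ.Nonempty) (a b : E) : ¬ G.cutEdges S ⊆ {a, b} := by
  intro h
  have h3 := Set.ncard_le_ncard h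
  have := Set.ncard_insert_le a {b}
  have := hG.three_le_cut S h1 h2
  simp only [Set.ncard_singleton] at *
  omega

end IsCubicThreeEdgeConnected

/-- `M` contains, inside the region `D`, the ends of `f` and of a further boundary edge of `D`. -/
def Carries (G : Multigraph V E) (D : Set V) (f : E) (M : Set V) : Prop :=
  G.Linked M ∧ G.Meets f M ∧ ∃ g ∈ G.cutEdges D, g ≠ f ∧ G.Meets g M

/-- Removing from a linked set a vertex with at most one edge into the set keeps it linked. -/
theorem Linked.remove_leaf {M : Set V} {v : V} {x : E} (hM : G.Linked M)
    (hx : ∀ e ∈ G.between {v} (M \ {v}), e = x) : G.Linked (M \ {v}) := by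
  by_cases hv : v ∈ M
  swap
  · rwa [Set.sdiff_singleton_eq_self hv]
  intro A hA hA1 hA2
  have hAM : ∀ y ∈ A, y ∈ M ∧ y ≠ v := fun y hy => hA hy
  obtain ⟨e, -, he⟩ := hM A (fun y hy => (hAM y hy).1) hA1 ⟨v, hv, fun h => (hAM v h).2 rfl⟩
  obtain ⟨f, -, hf⟩ := hM ((M \ {v}) \ A) (fun y hy => hy.1.1) hA2 ⟨v, hv, fun h => h.1.2 rfl⟩
  have h1 := hx e
  have h2 := hx f
  by_cases hev : G.src e = v ∨ G.tgt e = v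
  · by_cases hfv : G.src f = v ∨ G.tgt f = v
    · exfalso
      simp only [mem_between, Set.mem_sdiff, Set.mem_singleton_iff] at *
      grind
    · refine ⟨f, trivial, ?_⟩
      simp only [mem_between, Set.mem_sdiff, Set.mem_singleton_iff] at *
      grind
  · refine ⟨e, trivial, ?_⟩
    simp only [mem_between, Set.mem_sdiff, Set.mem_singleton_iff] at *
    grind

section Peel

variable {D K : Set V} {f g : E}

/-- The part of `M` cut off from the linked set `U` by the vertex `v`. -/
theorem exists_far_side [Finite V] {M U : Set V} {v : V} (hM : G.Linked M) (hU : G.Linked U)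
    (hUM : U ⊆ M \ {v}) (hv : v ∈ M) :
    ∃ C, U ⊆ C ∧ C ⊆ M \ {v} ∧ G.Linked C ∧ G.Linked (M \ C) ∧
      ∀ e, e ∉ G.between C ((M \ {v}) \ C) := by
  obtain ⟨C, h1, h2, h3, h4⟩ := exists_component hU hUM
  exact ⟨C, h1, h2, h3, hM.diff (linkedBy_singleton _ v) (by simpa) ⟨v, rfl⟩ h2 h4,
    fun e he => h4 e he trivial⟩

set_option maxHeartbeats 1000000 in
/-- If no vertex of `M = D \ K` can be moved to `K`, then every vertex of `M` is adjacent
to `K`. -/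
theorem forall_adjacent_of_maximal [Finite V] [Finite E] (hG : G.IsCubicThreeEdgeConnected)
    (hKne : K.Nonempty) (hKD : K ⊆ D) (hD : G.Linked D) (hM : G.Linked (D \ K))
    (hf : f ∈ G.cutEdges D) (hg : g ∈ G.cutEdges D) (hfg : g ≠ f)
    (hfM : G.Meets f (D \ K)) (hgM : G.Meets g (D \ K))
    (hng : ∀ v ∈ D \ K, (∃ h, h ∈ G.between {v} K) →
      ∀ M' ⊆ (D \ K) \ {v}, ¬ G.Carries D f M')
    (hstar : ∀ U ⊆ D \ K, U.Nonempty → ¬ G.Meets f U → ∀ b, ¬ G.between U (D \ U) ⊆ {b}) :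
    ∀ v ∈ D \ K, ∃ h, h ∈ G.between {v} K := by
  set M := D \ K with hMdef
  have hMD : ∀ x ∈ M, x ∈ D ∧ x ∉ K := fun x hx => hx
  by_contra! hcon
  obtain ⟨u, hu, hu'⟩ := hcon
  set N : Set V := {v | v ∈ M ∧ ∃ h, h ∈ G.between {v} K} with hN
  obtain ⟨U, hUu, hUN, hU, hUcl⟩ := exists_component (G := G) (P := Set.univ) (S := M \ N)
    (linkedBy_singleton _ u) (by
      rintro x rfl
      exact ⟨hu, fun h => by obtain ⟨_, e, he⟩ := h; exact hu' e he⟩)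
  have hUM : ∀ x ∈ U, x ∈ M ∧ x ∉ N := fun x hx => hUN hx
  have huU : u ∈ U := hUu rfl
  obtain ⟨k, hk⟩ := hKne
  -- edges leaving `U` inside `D` lead to `N`
  have hout : ∀ e ∈ G.between U (D \ U), ∃ v ∈ N, e ∈ G.between U {v} := by
    intro e he
    have hcl := hUcl e
    have hnk : ∀ x ∈ U, e ∉ G.between {x} K := fun x hx h => (hUM x hx).2 ⟨(hUM x hx).1, e, h⟩
    have key : ∀ x y, x ∈ U → y ∈ D → y ∉ U →
        (G.src e = x ∧ G.tgt e = y ∨ G.src e = y ∧ G.tgt e = x) → y ∈ N := by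
      intro x y hx hy hyU hxy
      by_contra hyN
      have hyK : y ∉ K := fun hyK => hnk x hx (by simp only [mem_between]; grind)
      refine hcl ?_ trivial
      have : y ∈ M := ⟨hy, hyK⟩
      simp only [mem_between, Set.mem_sdiff]; grind
    rcases he with ⟨h1, h2⟩ | ⟨h1, h2⟩
    · exact ⟨_, key _ _ h1 h2.1 h2.2 (Or.inl ⟨rfl, rfl⟩), Or.inl ⟨h1, rfl⟩⟩
    · exact ⟨_, key _ _ h2 h1.1 h1.2 (Or.inr ⟨rfl, rfl⟩), Or.inr ⟨rfl, h2⟩⟩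
  have hNU : ∀ v ∈ N, v ∉ U := fun v hv hvU => (hUM v hvU).2 hv
  have hsides : ∀ v ∈ N, ∃ C, U ⊆ C ∧ C ⊆ M \ {v} ∧ G.Linked C ∧ G.Linked (M \ C) ∧
      ∀ e, e ∉ G.between C ((M \ {v}) \ C) := fun v hv =>
    exists_far_side hM hU (fun x hx => ⟨(hUM x hx).1, fun h => hNU v hv (h ▸ hx)⟩) hv.1
  choose! C hUC hCM hC hZ hCcl using hsides
  have hCM' : ∀ v ∈ N, ∀ x ∈ C v, x ∈ M ∧ x ≠ v := fun v hv x hx => hCM v hv hx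
  -- the far side of `v` has the end of `f` or the ends of all other boundary edges
  have htype : ∀ v ∈ N, G.Meets f (M \ C v) ∨
      ∀ t ∈ G.cutEdges D, t ≠ f → G.Meets t M → G.Meets t (M \ C v) := by
    intro v hv
    by_contra! h
    obtain ⟨h1, t, ht, htf, htM, htZ⟩ := h
    refine hng v hv.1 hv.2 (C v) (hCM v hv) ⟨hC v hv, ?_, t, ht, htf, ?_⟩
    · simp only [Meets, Set.mem_sdiff] at *; grind
    · simp only [Meets, Set.mem_sdiff] at *; grind
  have hback : ∀ t ∈ G.cutEdges D, ∀ A B : Set V, (∀ x ∈ A, x ∈ D) → (∀ x ∈ B, x ∈ D) →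
      (∀ x ∈ A, x ∉ B) → G.Meets t A → ¬ G.Meets t B := by
    intro t ht A B hA hB hAB
    simp only [Meets, mem_cutEdges] at *; grind
  have hZD : ∀ v, ∀ x ∈ M \ C v, x ∈ D := fun v x hx => (hMD x hx.1).1
  have hUZ : ∀ v ∈ N, ∀ x ∈ U, x ∉ M \ C v := fun v hv x hx h => h.2 (hUC v hv hx)
  have hmem : ∀ v ∈ N, ∀ v' ∈ N, ∀ e' ∈ G.between U {v'}, v ≠ v' → v' ∈ C v := by
    intro v hv v' hv' e' he' hne
    by_contra hc
    refine hCcl v hv e' ?_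
    have h1 : ∀ x ∈ U, x ∈ C v := hUC v hv
    have h2 := hv'.1
    simp only [mem_between, Set.mem_sdiff, Set.mem_singleton_iff] at *
    grind
  have hdisj : ∀ v ∈ N, ∀ v' ∈ N, ∀ e ∈ G.between U {v}, ∀ e' ∈ G.between U {v'}, v ≠ v' →
      ∀ x ∈ M \ C v, x ∉ M \ C v' := by
    intro v hv v' hv' e he e' he' hne x hx hx'
    have h1 := hmem v hv v' hv' e' he' hne
    have h2 := hmem v' hv' v hv e he hne.symm
    refine hx'.2 ((hZ v hv).subset_of_meets (S := M \ {v'}) ?_ (fun e he _ => hCcl v' hv' e he)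
      ⟨v, ⟨hv.1, fun h => (hCM' v hv v h).2 rfl⟩, h2⟩ hx)
    exact fun y hy => ⟨hy.1, fun h => hy.2 (by rw [h]; exact h1)⟩
  have hone : ∀ v ∈ N, ∀ e ∈ G.between U {v}, ∀ e' ∈ G.between U {v}, e = e' := by
    intro v hv e he e' he'
    by_contra hee
    obtain ⟨hvM, h, hh⟩ := hv
    have hvD := hMD v hvM
    have hvC : v ∉ C v := fun h => (hCM' v ⟨hvM, _, hh⟩ v h).2 rfl
    have hUK : ∀ x ∈ U, x ∈ D ∧ x ∉ K := fun x hx => hMD x (hUM x hx).1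
    have hKD' : ∀ x ∈ K, x ∈ D := hKD
    have hvU := hNU v ⟨hvM, _, hh⟩
    have hat : ∀ d, G.src d = v ∨ G.tgt d = v → d = h ∨ d = e ∨ d = e' := by
      intro d hd
      have h1 : h ≠ e := by
        rintro rfl
        simp only [mem_between, Set.mem_singleton_iff] at *; grind
      have h2 : h ≠ e' := by
        rintro rfl
        simp only [mem_between, Set.mem_singleton_iff] at *; grind
      refine hG.eq_or_eq_or_eq (v := v) ?_ ?_ ?_ hd h1 h2 hee
      all_goals simp only [mem_between, Set.mem_singleton_iff] at *; grind
    have hZv : ∀ x ∈ M \ C v, x = v := by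
      by_contra! hx
      obtain ⟨x, hx, hxv⟩ := hx
      obtain ⟨d, -, hd⟩ := hZ v ⟨hvM, h, hh⟩ {v} (by simpa using ⟨hvM, hvC⟩) ⟨v, rfl⟩ ⟨x, hx, hxv⟩
      have hUC' : ∀ x ∈ U, x ∈ C v := hUC v ⟨hvM, h, hh⟩
      have := hat d (by simp only [mem_between, Set.mem_singleton_iff] at hd; grind)
      simp only [mem_between, Set.mem_sdiff, Set.mem_singleton_iff] at *
      grind
    have hno : ∀ t ∈ G.cutEdges D, ¬ G.Meets t (M \ C v) := by
      intro t ht hm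
      clear hdisj hmem hback hUZ hZD htype hCcl hout hUcl hng hstar hCM' hCM hC hZ hf hg hu' hN
      have := hat t (by simp only [Meets] at hm; grind)
      simp only [mem_between, mem_cutEdges, Set.mem_singleton_iff] at *
      grind
    rcases htype v ⟨hvM, h, hh⟩ with h1 | h1
    · exact hno f hf h1
    · exact hno g hg (h1 g hg hfg hgM)
  have hsame : ∀ t ∈ G.cutEdges D, ∀ v ∈ N, ∀ v' ∈ N, ∀ e ∈ G.between U {v},
      ∀ e' ∈ G.between U {v'}, v ≠ v' → G.Meets t (M \ C v) → ¬ G.Meets t (M \ C v') :=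
    fun t ht v hv v' hv' e he e' he' hne =>
      hback t ht _ _ (hZD v) (hZD v') (hdisj v hv v' hv' e he e' he' hne)
  have hUD : ∀ x ∈ U, x ∈ D := fun x hx => (hMD x (hUM x hx).1).1
  have hcut : ∀ x ∈ G.cutEdges U, x ∉ G.between U (D \ U) → x ∈ G.cutEdges D ∧ G.Meets x U := by
    intro x hx hxb
    simp only [mem_cutEdges, mem_between, Meets, Set.mem_sdiff] at *
    grind
  have htwo : ∀ v ∈ N, ¬ G.Meets f (M \ C v) → ∀ x ∈ G.cutEdges D, x ≠ f → ¬ G.Meets x U := by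
    intro v hv h1 x hx hxf hxU
    refine hback x hx _ _ hUD (hZD v) (hUZ v hv) hxU ((htype v hv).resolve_left h1 x hx hxf ?_)
    simp only [Meets] at *; grind
  have hUne : U.Nonempty := ⟨u, huU⟩
  have hUcne : Uᶜ.Nonempty := ⟨k, fun h => (hMD k (hUM k h).1).2 hk⟩
  by_cases hfU : G.Meets f U
  · obtain ⟨a, -, ha⟩ := hD U hUD hUne ⟨k, hKD hk, fun h => (hMD k (hUM k h).1).2 hk⟩
    have h1 : ∀ v ∈ N, ¬ G.Meets f (M \ C v) := fun v hv =>
      hback f hf _ _ hUD (hZD v) (hUZ v hv) hfU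
    refine hG.not_cut_subset_pair hUne hUcne a f fun x hx => ?_
    obtain ⟨v, hv, hav⟩ := hout a ha
    by_cases hxb : x ∈ G.between U (D \ U)
    · left
      obtain ⟨v', hv', hxv⟩ := hout x hxb
      by_cases hvv : v = v'
      · subst hvv; exact hone v hv _ hxv _ hav
      · exact absurd ((htype v' hv').resolve_left (h1 v' hv') g hg hfg hgM)
          (hsame g hg v hv v' hv' a hav x hxv hvv ((htype v hv).resolve_left (h1 v hv) g hg hfg hgM))
    · right
      obtain ⟨h2, h3⟩ := hcut x hx hxb
      by_contra hxf
      exact htwo v hv (h1 v hv) x h2 hxf h3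
  · obtain ⟨a, ha, -⟩ := Set.not_subset.1 (hstar U (fun x hx => (hUM x hx).1) hUne hfU f)
    obtain ⟨b, hb, hba⟩ := Set.not_subset.1 (hstar U (fun x hx => (hUM x hx).1) hUne hfU a)
    obtain ⟨v, hv, hav⟩ := hout a ha
    obtain ⟨w, hw, hbw⟩ := hout b hb
    have hvw : v ≠ w := by rintro rfl; exact hba (hone v hv _ hbw _ hav)
    refine hG.not_cut_subset_pair hUne hUcne a b fun x hx => ?_
    by_cases hxb : x ∈ G.between U (D \ U)
    · obtain ⟨z, hz, hxz⟩ := hout x hxb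
      by_cases hvz : v = z
      · subst hvz; exact Or.inl (hone v hv _ hxz _ hav)
      by_cases hwz : w = z
      · subst hwz; exact Or.inr (hone w hw _ hxz _ hbw)
      have hvw' := fun t ht => hsame t ht v hv w hw a hav b hbw hvw
      have hvz' := fun t ht => hsame t ht v hv z hz a hav x hxz hvz
      have hwz' := fun t ht => hsame t ht w hw z hz b hbw x hxz hwz
      rcases (htype v hv).imp_right fun h => h g hg hfg hgM with h1 | h1 <;>
      rcases (htype w hw).imp_right fun h => h g hg hfg hgM with h2 | h2 <;>
      rcases (htype z hz).imp_right fun h => h g hg hfg hgM with h3 | h3 <;>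
      first
      | exact (hvw' _ ‹_› h1 h2).elim
      | exact (hvz' _ ‹_› h1 h3).elim
      | exact (hwz' _ ‹_› h2 h3).elim
    · obtain ⟨h2, h3⟩ := hcut x hx hxb
      have hxf : x ≠ f := by rintro rfl; exact hfU h3
      by_cases h1 : G.Meets f (M \ C v)
      · exact absurd h3 (htwo w hw (hsame f hf v hv w hw a hav b hbw hvw h1) x h2 hxf)
      · exact absurd h3 (htwo v hv h1 x h2 hxf)

end Peel

/-- `Q` is a part of `D` whose removal leaves a nonempty connected rest, in which every vertex has
exactly one edge to the rest, and which is minimal among the connected sets joining the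
boundary edges `f` and `g` of `D`, the only two boundary edges of `D` at `Q`. -/
structure IsStrip (G : Multigraph V E) (D Q : Set V) (f g : E) : Prop where
  subset : Q ⊆ D
  rest_nonempty : (D \ Q).Nonempty
  linked_rest : G.Linked (D \ Q)
  linked : G.Linked Q
  left_mem : f ∈ G.cutEdges D
  right_mem : g ∈ G.cutEdges D
  ne : g ≠ f
  meets_left : G.Meets f Q
  meets_right : G.Meets g Q
  eq_or_eq : ∀ t ∈ G.cutEdges D, G.Meets t Q → t = f ∨ t = g
  existsUnique : ∀ v ∈ Q, ∃! e, e ∈ G.between {v} (D \ Q)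
  minimal : ∀ M ⊆ Q, G.Linked M → G.Meets f M → G.Meets g M → M = Q

/-- In a situation where no vertex of `D \ K` can be moved to `K`, a vertex of `D \ K` has only
one edge leaving `D \ K` other than `f` and `g`. -/
theorem false_of_two_leaving [Finite E] (hG : G.IsCubicThreeEdgeConnected)
    {D K : Set V} {f g : E} (hKD : K ⊆ D) (hM : G.Linked (D \ K))
    (hf : f ∈ G.cutEdges D) (hg : g ∈ G.cutEdges D) (hfg : g ≠ f)
    (hfM : G.Meets f (D \ K)) (hgM : G.Meets g (D \ K))
    (hng : ∀ v ∈ D \ K, (∃ h, h ∈ G.between {v} K) →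
      ∀ M' ⊆ (D \ K) \ {v}, ¬ G.Carries D f M')
    {v : V} {h h' : E} (hv : v ∈ D \ K) (hh : h ∈ G.between {v} K)
    (hv' : G.src h' = v ∨ G.tgt h' = v) (hne : h ≠ h') (hf' : h' ≠ f) (hg' : h' ≠ g)
    (hin : h' ∉ G.inside (D \ K)) : False := by
  obtain ⟨x, hx, hxh, hxh'⟩ := hG.exists_third v h h'
  have hKD' : ∀ x ∈ K, x ∈ D := hKD
  have hhv : G.src h = v ∨ G.tgt h = v := by
    simp only [mem_between, Set.mem_singleton_iff] at hh; grind
  have hat : ∀ d, G.src d = v ∨ G.tgt d = v → d = h ∨ d = h' ∨ d = x := fun d hd =>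
    hG.eq_or_eq_or_eq hhv hv' hx hd hne hxh.symm hxh'.symm
  have hleaf : ∀ e ∈ G.between {v} ((D \ K) \ {v}), e = x := by
    intro e he
    have := hat e (by simp only [mem_between, Set.mem_singleton_iff] at he; grind)
    clear hng hat
    rcases this with rfl | rfl | rfl
    · simp only [mem_between, mem_inside, Set.mem_sdiff, Set.mem_singleton_iff] at *; grind
    · simp only [mem_between, mem_inside, Set.mem_sdiff, Set.mem_singleton_iff] at *; grind
    · rfl
  have hlink := hM.remove_leaf hleaf
  have key : ∀ a b : E, a ∈ G.cutEdges D → b ∈ G.cutEdges D → a ≠ b → a ≠ h' → b ≠ h' →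
      G.Meets a (D \ K) → G.Meets b (D \ K) → G.Meets a ((D \ K) \ {v}) := by
    intro a b ha hb hab ha' hb' haM hbM
    by_contra hcon
    have hav : G.src a = v ∨ G.tgt a = v := by
      simp only [Meets, Set.mem_sdiff, Set.mem_singleton_iff] at haM hcon; tauto
    have hbnd : ∀ d ∈ G.cutEdges D, d ≠ h' → G.src d = v ∨ G.tgt d = v → d = x := by
      intro d hd hd' hdv
      rcases hat d hdv with rfl | rfl | rfl
      · clear hng hat
        simp only [mem_between, mem_cutEdges, Set.mem_sdiff, Set.mem_singleton_iff] at *; grind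
      · exact absurd rfl hd'
      · rfl
    have hax := hbnd a ha ha' hav
    have hsing : ∀ y ∈ D \ K, y = v := by
      by_contra! hy
      obtain ⟨y, hy, hyv⟩ := hy
      obtain ⟨e, -, he⟩ := hM {v} (by simpa using hv) ⟨v, rfl⟩ ⟨y, hy, hyv⟩
      have hex := hleaf e he
      clear hng hat hbnd
      subst hax hex
      simp only [mem_between, mem_cutEdges, Set.mem_sdiff, Set.mem_singleton_iff] at *; grind
    have hbv : G.src b = v ∨ G.tgt b = v := by
      simp only [Meets] at hbM; grind
    exact hab (hax.trans (hbnd b hb hb' hbv).symm)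
  exact hng v hv ⟨h, hh⟩ _ subset_rfl ⟨hlink, key f g hf hg hfg.symm hf'.symm hg'.symm hfM hgM,
    g, hg, hfg, key g f hg hf hfg hg'.symm hf'.symm hgM hfM⟩

/-- Existence of strips. -/
theorem exists_isStrip [Finite V] [Finite E] (hG : G.IsCubicThreeEdgeConnected)
    {D K₀ M₀ : Set V} {f : E} (hD : G.Linked D) (hK₀ : G.Linked K₀) (hne : K₀.Nonempty)
    (hK₀D : K₀ ⊆ D) (hM₀ : M₀ ⊆ D \ K₀) (hf : f ∈ G.cutEdges D) (hc : G.Carries D f M₀)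
    (hstar : ∀ U ⊆ D \ K₀, U.Nonempty → ¬ G.Meets f U → ∀ b, ¬ G.between U (D \ U) ⊆ {b}) :
    ∃ Q g, G.IsStrip D Q f g ∧ K₀ ⊆ D \ Q := by
  obtain ⟨K, h0K, ⟨⟨-, hKD, hK, M₁, hM₁, hc₁⟩, hmax⟩⟩ := (Set.toFinite {K : Set V | K₀ ⊆ K ∧ K ⊆ D ∧
    G.Linked K ∧ ∃ M₁ ⊆ D \ K, G.Carries D f M₁}).exists_le_maximal
    (show K₀ ∈ _ from ⟨subset_rfl, hK₀D, hK₀, M₀, hM₀, hc⟩)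
  have h0K : K₀ ⊆ K := h0K
  have hKne : K.Nonempty := hne.mono h0K
  have hKD' : ∀ x ∈ K, x ∈ D := hKD
  have hM : G.Linked (D \ K) := by
    obtain ⟨C, h1, h2, h3, h4⟩ := exists_component hc₁.1 hM₁
    have h5 : G.Linked (D \ C) := hD.diff hK hKD hKne h2 h4
    have h6 : K ⊆ D \ C := fun x hx => ⟨hKD hx, fun h => (h2 h).2 hx⟩
    have h7 : D \ C ⊆ K := hmax ⟨h0K.trans h6, Set.sdiff_subset, h5, M₁,
      fun x hx => ⟨(hM₁ hx).1, fun h => h.2 (h1 hx)⟩, hc₁⟩ h6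
    have : D \ K = C := by
      refine Set.Subset.antisymm (fun x hx => ?_) h2
      by_contra hxC
      exact hx.2 (h7 ⟨hx.1, hxC⟩)
    rwa [this]
  obtain ⟨-, hfM₁, g, hg, hgf, hgM₁⟩ := hc₁
  have hmono : ∀ t, G.Meets t M₁ → G.Meets t (D \ K) := fun t ht => ht.imp (@hM₁ _) (@hM₁ _)
  have hng : ∀ v ∈ D \ K, (∃ h, h ∈ G.between {v} K) →
      ∀ M' ⊆ (D \ K) \ {v}, ¬ G.Carries D f M' := by
    rintro v hv ⟨h, hh⟩ M' hM' hc'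
    refine hv.2 (hmax (y := insert v K) ⟨h0K.trans (Set.subset_insert _ _),
      Set.insert_subset hv.1 hKD, hK.insert trivial hh, M', fun x hx => ⟨(hM' hx).1.1, ?_⟩, hc'⟩
      (Set.subset_insert _ _) (Set.mem_insert _ _))
    rintro (rfl | h)
    · exact (hM' hx).2 rfl
    · exact (hM' hx).1.2 h
  have hadj := forall_adjacent_of_maximal hG hKne hKD hD hM hf hg hgf (hmono f hfM₁) (hmono g hgM₁)
    hng (fun U hU => hstar U (fun x hx => ⟨(hU hx).1, fun h => (hU hx).2 (h0K h)⟩))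
  have htwo : ∀ {v : V} {h h' : E}, v ∈ D \ K → h ∈ G.between {v} K →
      (G.src h' = v ∨ G.tgt h' = v) → h ≠ h' → h' ≠ f → h' ≠ g → h' ∉ G.inside (D \ K) → False :=
    fun h1 h2 h3 h4 h5 h6 h7 => false_of_two_leaving hG hKD hM hf hg hgf (hmono f hfM₁)
      (hmono g hgM₁) hng h1 h2 h3 h4 h5 h6 h7
  have hDK : D \ (D \ K) = K := by rw [Set.sdiff_sdiff_cancel_left hKD]
  refine ⟨D \ K, g, ⟨Set.sdiff_subset, by rwa [hDK], by rwa [hDK], hM, hf, hg, hgf, hmono f hfM₁,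
    hmono g hgM₁, ?_, ?_, ?_⟩, by rwa [hDK]⟩
  · intro t ht htM
    by_contra! hcon
    have : ∃ v ∈ D \ K, G.src t = v ∨ G.tgt t = v := by
      rcases htM with h | h
      exacts [⟨_, h, Or.inl rfl⟩, ⟨_, h, Or.inr rfl⟩]
    obtain ⟨v, hv, htv⟩ := this
    obtain ⟨h, hh⟩ := hadj v hv
    clear hadj hng hmax hstar
    refine htwo hv hh htv ?_ hcon.1 hcon.2 ?_
    · rintro rfl
      simp only [mem_between, mem_cutEdges, Set.mem_sdiff, Set.mem_singleton_iff] at *; grind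
    · simp only [mem_inside, mem_cutEdges, Set.mem_sdiff] at *; grind
  · intro v hv
    rw [hDK]
    obtain ⟨h, hh⟩ := hadj v hv
    refine ⟨h, hh, fun h' hh' => ?_⟩
    by_contra hne
    refine htwo hv hh ?_ (fun h => hne h.symm) ?_ ?_ ?_ <;> clear htwo hadj hng hmax hstar hne
    · simp only [mem_between, Set.mem_singleton_iff] at *; grind
    · rintro rfl
      simp only [mem_between, mem_cutEdges, Set.mem_sdiff, Set.mem_singleton_iff] at *; grind
    · rintro rfl
      simp only [mem_between, mem_cutEdges, Set.mem_sdiff, Set.mem_singleton_iff] at *; grind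
    · simp only [mem_between, mem_inside, Set.mem_sdiff, Set.mem_singleton_iff] at *; grind
  · intro M' hM' hlink hfM' hgM'
    refine Set.Subset.antisymm hM' fun v hv => ?_
    by_contra hvM
    exact hng v hv (hadj v hv) M' (fun x hx => ⟨hM' hx, fun h => hvM (h ▸ hx)⟩)
      ⟨hlink, hfM', g, hg, hgf, hgM'⟩

theorem IsCubicThreeEdgeConnected.ncard_add_ncard_eq_two [Finite E]
    (hG : G.IsCubicThreeEdgeConnected) {S : Set V} {v : V} (hv : v ∈ S)
    (hS : ∃! e, e ∈ G.between {v} Sᶜ) :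
    {e ∈ G.inside S | G.src e = v}.ncard + {e ∈ G.inside S | G.tgt e = v}.ncard = 2 := by
  obtain ⟨d, hd, hd'⟩ := hS
  have hl := hG.src_ne_tgt
  rw [← Set.ncard_union_eq]
  · have h1 : {e ∈ G.inside S | G.src e = v} ∪ {e ∈ G.inside S | G.tgt e = v} =
        {e | G.src e = v ∨ G.tgt e = v} \ {d} := by
      ext e
      have := hd' e
      by_cases he : e = d
      · subst he
        simp only [mem_between, mem_inside, Set.mem_sdiff, Set.mem_union, Set.mem_ofPred_eq,
          Set.mem_singleton_iff, Set.mem_compl_iff] at *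
        grind
      · simp only [mem_between, mem_inside, Set.mem_sdiff, Set.mem_union, Set.mem_ofPred_eq,
          Set.mem_singleton_iff, Set.mem_compl_iff] at *
        grind
    rw [h1, Set.ncard_sdiff_singleton_of_mem, hG.ncard_incident]
    simp only [mem_between, Set.mem_singleton_iff, Set.mem_ofPred_eq] at *
    grind
  · rw [Set.disjoint_left]
    intro e he he'
    exact hl e (he.2.trans he'.2.symm)

/-- A connected set in which every vertex has exactly one edge to the outside induces a cycle. -/
theorem isCycle_inside [Finite E] (hG : G.IsCubicThreeEdgeConnected) {S : Set V}
    (hne : S.Nonempty) (hlink : G.Linked S) (hS : ∀ v ∈ S, ∃! e, e ∈ G.between {v} Sᶜ) :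
    G.IsCycle (G.inside S) := by
  have htouch : ∀ v, G.touches (G.inside S) v → v ∈ S := by
    rintro v ⟨e, he, rfl | rfl⟩
    exacts [he.1, he.2]
  refine ⟨?_, fun v hv => hG.ncard_add_ncard_eq_two (htouch v hv) (hS v (htouch v hv)), ?_⟩
  · obtain ⟨v, hv⟩ := hne
    have h2 := hG.ncard_add_ncard_eq_two hv (hS v hv)
    by_contra hemp
    rw [Set.not_nonempty_iff_eq_empty] at hemp
    simp [hemp] at h2
  · intro u v hu hv
    have := hlink.inter_inside
    rw [Set.univ_inter] at this
    exact this.reaches (htouch u hu) (htouch v hv)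

theorem peripheral_inside {S : Set V}
    (hne : Sᶜ.Nonempty) (hlink : G.Linked Sᶜ) (hS : ∀ v ∈ S, ∃! e, e ∈ G.between {v} Sᶜ) :
    G.Peripheral (G.inside S) := by
  obtain ⟨k, hk⟩ := hne
  have h1 : G.LinkedBy (G.inside S)ᶜ Sᶜ := by
    have := hlink.inter_inside
    rw [Set.univ_inter] at this
    exact this.mono fun e he he' => he.1 he'.1
  have h2 : G.LinkedBy (G.inside S)ᶜ Set.univ := by
    refine h1.of_subset (Set.subset_univ _) ?_
    rintro A hA ⟨a, ha⟩
    have hAS : ∀ x ∈ A, x ∈ S := fun x hx => by simpa using hA hx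
    obtain ⟨e, he, -⟩ := hS a (hAS a ha)
    refine ⟨e, ?_, ?_⟩ <;>
    · simp only [mem_between, mem_inside, Set.mem_sdiff, Set.mem_singleton_iff, Set.mem_univ,
        Set.mem_compl_iff] at *
      grind
  exact ⟨⟨k⟩, fun u v => h2.reaches trivial trivial⟩

/-- A strip can be completed to a peripheral cycle, which bounds its number of edges. -/
theorem IsStrip.ncard_inside_lt [Finite V] [Finite E] (hG : G.IsCubicThreeEdgeConnected)
    {H Q : Set V} {f g : E} {q : ℕ} (h : G.IsStrip H Q f g) (hH : G.Linked Hᶜ)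
    (hq : ∀ C, G.IsCycle C → G.Peripheral C → C.ncard ≤ q) : (G.inside Q).ncard + 1 ≤ q := by
  obtain ⟨k, hkH, hkQ⟩ := h.rest_nonempty
  have hQH : ∀ x ∈ Q, x ∈ H := h.subset
  have hfcut := h.left_mem
  have hgcut := h.right_mem
  have hfQ := h.meets_left
  have hgQ := h.meets_right
  have hH1 : Hᶜ.Nonempty := by
    rcases hfcut with h | h
    exacts [⟨_, h.2⟩, ⟨_, h.1⟩]
  obtain ⟨d, hd, hdfg⟩ := Set.not_subset.1 (hG.not_cut_subset_pair ⟨k, hkH⟩ hH1 f g)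
  have hdQ : ¬ G.Meets d Q := fun hm => hdfg (h.eq_or_eq d hd hm)
  have hlink : G.Linked Qᶜ := by
    have : Qᶜ = (H \ Q) ∪ Hᶜ := by
      ext x; simp only [Set.mem_compl_iff, Set.mem_union, Set.mem_sdiff]; grind
    rw [this]
    refine h.linked_rest.union hH (e := d) trivial ?_
    simp only [Meets, mem_cutEdges, mem_between, Set.mem_sdiff, Set.mem_compl_iff] at *
    grind
  have hcutQ : ∀ t ∈ G.cutEdges H, G.Meets t Q → t ∈ G.cutEdges Qᶜ ∧ G.Meets t Hᶜ := by
    intro t ht htQ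
    clear hdQ hdfg hlink
    simp only [Meets, mem_cutEdges, Set.mem_compl_iff] at *
    grind
  obtain ⟨M, g', hM, hKM⟩ := exists_isStrip hG (D := Qᶜ) (K₀ := H \ Q) (M₀ := Hᶜ) (f := f) hlink
    h.linked_rest ⟨k, hkH, hkQ⟩ (fun x hx => hx.2)
    (fun x hx => ⟨fun hxQ => hx (hQH x hxQ), fun hxH => hx hxH.1⟩) (hcutQ f hfcut hfQ).1
    ⟨hH, (hcutQ f hfcut hfQ).2, g, (hcutQ g hgcut hgQ).1, h.ne, (hcutQ g hgcut hgQ).2⟩ (by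
      intro U hU hUne hfU b hb
      have hU' : ∀ x ∈ U, x ∉ H := fun x hx hxH => (hU hx).2 ⟨hxH, (hU hx).1⟩
      refine hG.not_cut_subset_pair hUne ⟨k, fun hkU => hU' k hkU hkH⟩ b g fun x hx => ?_
      by_cases hxb : x ∈ G.between U (Qᶜ \ U)
      · exact Or.inl (hb hxb)
      · right
        have h1 : x ∈ G.cutEdges H ∧ G.Meets x Q := by
          clear hcutQ hfU hdQ hdfg hfcut hgcut hd
          simp only [Meets, mem_cutEdges, mem_between, Set.mem_sdiff, Set.mem_compl_iff] at *
          grind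
        refine (h.eq_or_eq x h1.1 h1.2).resolve_left ?_
        rintro rfl
        exact hfU (by simp only [Meets, mem_cutEdges] at *; grind))
  have hMH : ∀ x ∈ M, x ∉ H := by
    intro x hx hxH
    exact (hKM ⟨hxH, hM.subset hx⟩).2 hx
  have hMQ : ∀ x ∈ M, x ∉ Q := hM.subset
  have hgg : g' = g := by
    have h1 := hM.right_mem
    have h2 := hM.meets_right
    refine (h.eq_or_eq g' ?_ ?_).resolve_left hM.ne
    all_goals
      clear hcutQ hKM hfcut hgcut hd hdQ
      simp only [Meets, mem_cutEdges, Set.mem_compl_iff] at *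
      grind
  subst hgg
  have hfM := hM.meets_left
  have hgM := hM.meets_right
  have hSc : (Q ∪ M)ᶜ = Qᶜ \ M := by
    ext x; simp only [Set.mem_compl_iff, Set.mem_union, Set.mem_sdiff]; tauto
  have hfin : f ∈ G.inside (Q ∪ M) := by
    clear hcutQ hKM hgcut hd hdQ
    simp only [Meets, mem_cutEdges, mem_inside, Set.mem_union] at *
    grind
  have hgin : g' ∈ G.inside (Q ∪ M) := by
    clear hcutQ hKM hfcut hd hdQ
    simp only [Meets, mem_cutEdges, mem_inside, Set.mem_union] at *
    grind
  have hS : ∀ v ∈ Q ∪ M, ∃! e, e ∈ G.between {v} (Q ∪ M)ᶜ := by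
    rintro v (hv | hv)
    · obtain ⟨e, he, he'⟩ := h.existsUnique v hv
      refine ⟨e, ?_, fun d' hd' => he' d' ?_⟩
      · have : ∀ x ∈ H \ Q, x ∉ M := fun x hx hxM => hMH x hxM hx.1
        simp only [mem_between, Set.mem_sdiff, Set.mem_singleton_iff, Set.mem_compl_iff,
          Set.mem_union] at he ⊢
        grind
      · by_contra hcon
        have h1 : d' ∈ G.cutEdges H ∧ G.Meets d' Q := by
          clear hcutQ hKM hfcut hgcut hd he' hfin hgin hfM hgM hfQ hgQ hdQ hdfg
          simp only [Meets, mem_cutEdges, mem_between, Set.mem_sdiff, Set.mem_singleton_iff,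
            Set.mem_compl_iff, Set.mem_union] at *
          grind
        have h2 : d' ∈ G.inside (Q ∪ M) := by
          rcases h.eq_or_eq d' h1.1 h1.2 with rfl | rfl <;> assumption
        rcases hd' with h3 | h3
        exacts [h3.2 h2.2, h3.1 h2.1]
    · rw [hSc]; exact hM.existsUnique v hv
  have hSne : (Q ∪ M).Nonempty := ⟨_, hfin.1⟩
  have hlinkS : G.Linked (Q ∪ M) := by
    refine h.linked.union hM.linked (e := f) trivial ?_
    clear hcutQ hKM hgcut hd hdQ
    simp only [Meets, mem_cutEdges, mem_between] at *
    grind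
  have hle := hq _ (isCycle_inside hG hSne hlinkS hS)
    (peripheral_inside (by rw [hSc]; exact hM.rest_nonempty) (by rw [hSc]; exact hM.linked_rest) hS)
  refine le_trans ?_ hle
  rw [← Set.ncard_insert_of_notMem (a := f) (s := G.inside Q)]
  · refine Set.ncard_le_ncard (Set.insert_subset hfin fun e he => ⟨Or.inl he.1, Or.inl he.2⟩)
  · intro hfi
    rcases hfcut with h1 | h1
    exacts [h1.2 (hQH _ hfi.2), h1.1 (hQH _ hfi.1)]

/-- The boundary at `w` of a chain `φ` with coefficients modulo two. -/
noncomputable def boundary [Fintype E] (G : Multigraph V E) (φ : E → ZMod 2) (w : V) : ZMod 2 :=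
  ∑ e, φ e * ((if G.src e = w then 1 else 0) + (if G.tgt e = w then 1 else 0))

theorem boundary_add [Fintype E] (φ ψ : E → ZMod 2) (w : V) :
    G.boundary (φ + ψ) w = G.boundary φ w + G.boundary ψ w := by
  simp only [boundary, Pi.add_apply, add_mul, Finset.sum_add_distrib]

theorem boundary_single [Fintype E] (e : E) (w : V) :
    G.boundary (Pi.single e 1) w =
      (if G.src e = w then 1 else 0) + (if G.tgt e = w then 1 else 0) := by
  simp [boundary, Pi.single_apply]

theorem boundary_indicator [Fintype E] (C : Set E) (w : V) :
    G.boundary (fun e => if e ∈ C then 1 else 0) w =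
      (({e ∈ C | G.src e = w}.ncard + {e ∈ C | G.tgt e = w}.ncard : ℕ) : ZMod 2) := by
  simp only [boundary, mul_add, Finset.sum_add_distrib, Nat.cast_add, Set.ncard_eq_toFinset_card']
  simp only [ite_zero_mul_ite_zero, mul_one, Finset.sum_boole, Set.toFinset_ofPred]

theorem Reaches.exists_chain [Fintype E] {P : Set E} {u v : V} (h : G.Reaches (· ∈ P) u v) :
    ∃ φ : E → ZMod 2, (∀ e, φ e ≠ 0 → e ∈ P) ∧
      ∀ w, G.boundary φ w = (if u = w then 1 else 0) + (if v = w then 1 else 0) := by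
  induction h with
  | refl =>
    refine ⟨0, by simp, fun w => ?_⟩
    rw [CharTwo.add_self_eq_zero]
    simp [boundary]
  | @tail b c hab hbc ih =>
    obtain ⟨φ, h1, h2⟩ := ih
    obtain ⟨e, he, hec⟩ := hbc
    refine ⟨φ + Pi.single e 1, fun x hx => ?_, fun w => ?_⟩
    · by_cases hxe : x = e
      · subst hxe; exact he
      · exact h1 x (by simpa [Pi.single_apply, hxe] using hx)
    · rw [boundary_add, h2, boundary_single]
      have h3 := CharTwo.add_self_eq_zero (if b = w then 1 else 0 : ZMod 2)
      rcases hec with ⟨rfl, rfl⟩ | ⟨rfl, rfl⟩ <;> linear_combination h3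

theorem Reaches.symm {P : E → Prop} {u v : V} (h : G.Reaches P u v) : G.Reaches P v u :=
  have : Std.Symm (G.adjVia P) := ⟨fun _ _ ⟨e, he, h⟩ => ⟨e, he, h.symm⟩⟩
  Relation.ReflTransGen.stdSymm.symm _ _ h

/-- In a loopless cubic graph, every edge of an even edge set lies on a cycle. -/
theorem exists_isCycle_of_boundary_eq_zero [Fintype E] (hG : G.IsCubicThreeEdgeConnected)
    {C₀ : Set E} {f : E} (hf : f ∈ C₀)
    (h0 : ∀ w, G.boundary (fun e => if e ∈ C₀ then 1 else 0) w = 0) :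
    ∃ C ⊆ C₀, G.IsCycle C ∧ f ∈ C := by
  set C : Set E := {e ∈ C₀ | G.Reaches (· ∈ C₀) (G.src f) (G.src e)} with hC
  have htouch : ∀ w, G.touches C w → G.Reaches (· ∈ C₀) (G.src f) w := by
    rintro w ⟨e, ⟨he, hr⟩, rfl | rfl⟩
    · exact hr
    · exact hr.tail ⟨e, he, Or.inl ⟨rfl, rfl⟩⟩
  have hall : ∀ w, G.Reaches (· ∈ C₀) (G.src f) w → ∀ e ∈ C₀, (G.src e = w ∨ G.tgt e = w) →
      e ∈ C := by
    rintro w hw e he (rfl | rfl)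
    · exact ⟨he, hw⟩
    · exact ⟨he, hw.tail ⟨e, he, Or.inr ⟨rfl, rfl⟩⟩⟩
  have hreach : ∀ w, G.Reaches (· ∈ C₀) (G.src f) w → G.Reaches (· ∈ C) (G.src f) w := by
    intro w hw
    induction hw with
    | refl => exact Relation.ReflTransGen.refl
    | @tail b c hab hbc ih =>
      obtain ⟨e, he, hec⟩ := hbc
      exact ih.tail ⟨e, hall b hab e he (by tauto), hec⟩
  have hfC : f ∈ C := ⟨hf, Relation.ReflTransGen.refl⟩
  refine ⟨C, fun e he => he.1, ⟨⟨f, hfC⟩, fun w hw => ?_, fun u v hu hv =>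
    (hreach u (htouch u hu)).symm.trans (hreach v (htouch v hv))⟩, hfC⟩
  have h1 : {e ∈ C | G.src e = w} = {e ∈ C₀ | G.src e = w} :=
    Set.ext fun e => ⟨fun h => ⟨h.1.1, h.2⟩, fun h => ⟨hall w (htouch w hw) e h.1 (Or.inl h.2), h.2⟩⟩
  have h2 : {e ∈ C | G.tgt e = w} = {e ∈ C₀ | G.tgt e = w} :=
    Set.ext fun e => ⟨fun h => ⟨h.1.1, h.2⟩, fun h => ⟨hall w (htouch w hw) e h.1 (Or.inr h.2), h.2⟩⟩
  have h3 := h0 w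
  rw [boundary_indicator, ZMod.natCast_eq_zero_iff, ← h1, ← h2] at h3
  have hdisj : Disjoint {e ∈ C | G.src e = w} {e ∈ C | G.tgt e = w} :=
    Set.disjoint_left.2 fun e h h' => hG.src_ne_tgt e (h.2.trans h'.2.symm)
  rw [← Set.ncard_union_eq hdisj] at h3 ⊢
  have h4 : ({e ∈ C | G.src e = w} ∪ {e ∈ C | G.tgt e = w}).ncard ≤ 3 := by
    rw [← hG.ncard_incident w]
    exact Set.ncard_le_ncard fun e he => he.imp And.right And.right
  have h5 : 0 < ({e ∈ C | G.src e = w} ∪ {e ∈ C | G.tgt e = w}).ncard := by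
    rw [Set.ncard_pos]
    obtain ⟨e, he, hw | hw⟩ := hw
    exacts [⟨e, Or.inl ⟨he, hw⟩⟩, ⟨e, Or.inr ⟨he, hw⟩⟩]
  omega

/-- An edge closes a cycle with the edges of `P` when `P` links a set containing its ends. -/
theorem exists_isCycle_of_linkedBy [Fintype E] (hG : G.IsCubicThreeEdgeConnected) {P : Set E}
    {S : Set V} {f : E} (h : G.LinkedBy P S) (hf : f ∈ G.inside S) (hfP : f ∉ P) :
    ∃ C, G.IsCycle C ∧ f ∈ C ∧ C ⊆ insert f (P ∩ G.inside S) := by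
  obtain ⟨φ, h1, h2⟩ := (h.inter_inside.reaches hf.1 hf.2).exists_chain
  have hff : φ f = 0 := by
    by_contra hne
    exact hfP (h1 f hne).1
  obtain ⟨ψ, hψ⟩ : ∃ ψ : E → ZMod 2, ψ = φ + Pi.single f 1 := ⟨_, rfl⟩
  obtain ⟨C, hC, hcyc, hfC⟩ := exists_isCycle_of_boundary_eq_zero hG
    (C₀ := {e | ψ e ≠ 0}) (f := f) (by simp [hψ, hff]) (fun w => by
      have hind : (fun e => if e ∈ {e | ψ e ≠ 0} then (1 : ZMod 2) else 0) = ψ := by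
        ext e
        rcases (by decide : ∀ x : ZMod 2, x = 0 ∨ x = 1) (ψ e) with h | h <;> simp [h]
      refine (congrArg (fun χ => G.boundary χ w) (?_ : _ = ψ)).trans ?_
      · convert hind
      rw [hψ, boundary_add, h2, boundary_single, CharTwo.add_self_eq_zero])
  refine ⟨C, hcyc, hfC, fun e he => ?_⟩
  by_cases hef : e = f
  · exact Or.inl hef
  · exact Or.inr (h1 e (by simpa [hψ, Pi.single_apply, hef] using hC he))

/-- An edge set which is `2`-closed with respect to the cycles avoiding `r`. -/
def ClosedAvoiding (G : Multigraph V E) (r : V) (R : Set E) : Prop :=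
  ∀ C, G.IsCycle C → ¬ G.touches C r → (C \ R).Nonempty → 3 ≤ (C \ R).ncard

theorem ClosedAvoiding.mem [Fintype E] (hG : G.IsCubicThreeEdgeConnected) {r : V} {R P : Set E}
    (hR : G.ClosedAvoiding r R) {S : Set V} {f g : E} (hr : r ∉ S) (h : G.LinkedBy P S)
    (hP : P ⊆ insert g R) (hf : f ∈ G.inside S) (hfP : f ∉ P) : f ∈ R := by
  by_contra hfR
  obtain ⟨C, hC, hfC, hCP⟩ := exists_isCycle_of_linkedBy hG h hf hfP
  have hsub : C \ R ⊆ {f, g} := by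
    rintro e ⟨he, heR⟩
    rcases hCP he with h | h
    · exact Or.inl h
    · exact Or.inr ((hP h.1).resolve_right heR)
  have h3 := hR C hC (by
    rintro ⟨e, he, her⟩
    have : e ∈ G.inside S := by
      rcases hCP he with rfl | h
      exacts [hf, h.2]
    rcases her with rfl | rfl
    exacts [hr this.1, hr this.2]) ⟨f, hfC, hfR⟩
  have h4 := (Set.ncard_le_ncard hsub).trans (Set.ncard_insert_le f {g})
  simp only [Set.ncard_singleton] at h4
  omega

theorem ClosedAvoiding.mem_between [Fintype E] (hG : G.IsCubicThreeEdgeConnected) {r : V}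
    {R : Set E} (hR : G.ClosedAvoiding r R) {A B : Set V} {x y : E} (hrA : r ∉ A) (hrB : r ∉ B)
    (hA : G.Linked A) (hB : G.Linked B) (hAB : Disjoint A B) (hAR : G.inside A ⊆ R)
    (hBR : G.inside B ⊆ R) (hx : x ∈ G.between A B) (hy : y ∈ G.between A B) (hxy : x ≠ y) :
    x ∈ R := by
  have hA' := hA.inter_inside
  have hB' := hB.inter_inside
  rw [Set.univ_inter] at hA' hB'
  have hlink : G.LinkedBy (Insert.insert y (G.inside A ∪ G.inside B)) (A ∪ B) :=
    LinkedBy.union (hA'.mono fun e he => Or.inr (Or.inl he))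
      (hB'.mono fun e he => Or.inr (Or.inr he)) (Or.inl rfl) hy
  have hdis : ∀ v ∈ A, v ∉ B := fun v h h' => Set.disjoint_left.1 hAB h h'
  refine hR.mem hG (by simp [hrA, hrB]) hlink (g := y) ?_ ?_ ?_
  · exact Set.insert_subset_insert (Set.union_subset hAR hBR)
  · simp only [Multigraph.mem_between, mem_inside, Set.mem_union] at *; grind
  · simp only [Multigraph.mem_between, mem_inside, Set.mem_union, Set.mem_insert_iff] at *; grind

/-- The complement of `B` in `G[H]` is a spanning tree of `G[H]`, and `B` together with the edges
inside `Y` generates all edges inside `H ∪ Y` except possibly `e`. -/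
structure IsPartialBase (G : Multigraph V E) (r : V) (H Y : Set V) (e : E) (B : Set E) : Prop where
  subset : B ⊆ G.inside H
  linked : G.LinkedBy (G.inside H \ B) H
  ncard : (G.inside H \ B).ncard + 1 = H.ncard
  closure : ∀ R, G.ClosedAvoiding r R → B ⊆ R → G.inside Y ⊆ R → G.inside (H ∪ Y) \ {e} ⊆ R

theorem IsPartialBase.of_empty [Fintype E] (hG : G.IsCubicThreeEdgeConnected) {r : V}
    {H Y : Set V} {e : E} {B : Set E} (h : G.IsPartialBase r H ∅ e B) (hH : G.Linked H)
    (hY : G.Linked Y) (hHY : Disjoint H Y) (hrH : r ∉ H) (hrY : r ∉ Y) (he : e ∈ G.cutEdges H)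
    (hcut : ∀ f ∈ G.cutEdges H, f ≠ e → f ∈ G.between H Y) (h3 : 3 ≤ (G.cutEdges H).ncard) :
    G.IsPartialBase r H Y e B := by
  refine ⟨h.subset, h.linked, h.ncard, fun R hR hBR hYR x hx => ?_⟩
  have hdis : ∀ v ∈ H, v ∉ Y := fun v h h' => Set.disjoint_left.1 hHY h h'
  have hHR : G.inside H ⊆ R := fun y hy => h.closure R hR hBR (by rintro _ ⟨⟨⟩, _⟩) ⟨by simpa using hy,
    fun hye => by
      simp only [mem_inside, mem_cutEdges, Set.mem_singleton_iff] at *; grind⟩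
  by_cases h1 : x ∈ G.inside H
  · exact hHR h1
  by_cases h2 : x ∈ G.inside Y
  · exact hYR h2
  have hxb : x ∈ G.between H Y := by
    simp only [mem_inside, mem_between, Set.mem_sdiff, Set.mem_union] at *; grind
  obtain ⟨y, hy, hyx⟩ : ∃ y ∈ G.cutEdges H, y ∉ ({e, x} : Set E) := by
    refine Set.not_subset.1 fun hsub => ?_
    have := (Set.ncard_le_ncard hsub).trans (Set.ncard_insert_le e {x})
    simp only [Set.ncard_singleton] at this
    omega
  simp only [Set.mem_insert_iff, Set.mem_singleton_iff, not_or] at hyx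
  exact hR.mem_between hG hrH hrY hH hY hHY hHR hYR hxb (hcut y hy hyx.1) (Ne.symm hyx.2)

theorem IsPartialBase.union_of_bridge [Fintype V] [Fintype E] {r : V} {D D' Y : Set V} {e b : E}
    {B B' : Set E} (hDD' : Disjoint D D') (hDY : Disjoint D Y)
    (hD'Y : Disjoint D' Y) (hb : G.between D D' = {b})
    (h : G.IsPartialBase r D Y b B) (h' : G.IsPartialBase r D' (Y ∪ D) e B') :
    G.IsPartialBase r (D ∪ D') Y e (B ∪ B') := by
  have h1 : ∀ v ∈ D, v ∉ D' := fun v h h' => Set.disjoint_left.1 hDD' h h'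
  have h2 : ∀ v ∈ D, v ∉ Y := fun v h h' => Set.disjoint_left.1 hDY h h'
  have h3 : ∀ v ∈ D', v ∉ Y := fun v h h' => Set.disjoint_left.1 hD'Y h h'
  have hB : ∀ x ∈ B, x ∈ G.inside D := h.subset
  have hB' : ∀ x ∈ B', x ∈ G.inside D' := h'.subset
  have hbb : b ∈ G.between D D' := by rw [hb]; rfl
  have hbu : ∀ x, x ∈ G.between D D' → x = b := fun x hx => by rw [hb] at hx; exact hx
  have hT : G.inside (D ∪ D') \ (B ∪ B') =
      insert b ((G.inside D \ B) ∪ (G.inside D' \ B')) := by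
    ext x
    have := hbu x
    have := hB x
    have := hB' x
    clear hb hbu hB hB'
    by_cases hxb : x = b
    · subst hxb
      simp only [mem_inside, mem_between, Set.mem_sdiff, Set.mem_union, Set.mem_insert_iff] at *
      grind
    · simp only [mem_inside, mem_between, Set.mem_sdiff, Set.mem_union, Set.mem_insert_iff] at *
      grind
  refine ⟨?_, ?_, ?_, ?_⟩
  · rintro x (hx | hx)
    · exact ⟨Or.inl (hB x hx).1, Or.inl (hB x hx).2⟩
    · exact ⟨Or.inr (hB' x hx).1, Or.inr (hB' x hx).2⟩
  · rw [hT]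
    exact LinkedBy.union (h.linked.mono fun x hx => Or.inr (Or.inl hx))
      (h'.linked.mono fun x hx => Or.inr (Or.inr hx)) (Or.inl rfl) hbb
  · rw [hT, Set.ncard_insert_of_notMem, Set.ncard_union_eq, Set.ncard_union_eq hDD', ← h.ncard,
      ← h'.ncard]
    · ring
    · rw [Set.disjoint_left]
      intro x hx hx'
      exact h1 _ hx.1.1 hx'.1.1
    · simp only [mem_inside, mem_between, Set.mem_sdiff, Set.mem_union] at *; grind
  · intro R hR hBR hYR
    have hDYR : G.inside (Y ∪ D) ⊆ R := by
      intro x hx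
      refine h.closure R hR (fun y hy => hBR (Or.inl hy)) hYR ⟨by rwa [Set.union_comm], ?_⟩
      rintro rfl
      clear hb hbu hT hB hB'
      simp only [mem_inside, mem_between, Set.mem_union] at *; grind
    have := h'.closure R hR (fun y hy => hBR (Or.inr hy)) hDYR
    rwa [← Set.union_assoc, Set.union_comm D' Y, Set.union_assoc, Set.union_comm D' D,
      Set.union_comm Y] at this

section Strip

variable {H Q : Set V} {f g : E}

theorem IsStrip.ncard_between [Fintype V] [Fintype E] (h : G.IsStrip H Q f g) :
    (G.between Q (H \ Q)).ncard = Q.ncard := by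
  have : Nonempty E := ⟨f⟩
  have := h.existsUnique
  choose! φ hφ hφ' using this
  have : G.between Q (H \ Q) = φ '' Q := by
    ext x
    constructor
    · rintro (hx | hx)
      · exact ⟨_, hx.1, (hφ' _ hx.1 x (Or.inl ⟨rfl, hx.2⟩)).symm⟩
      · exact ⟨_, hx.2, (hφ' _ hx.2 x (Or.inr ⟨hx.1, rfl⟩)).symm⟩
    · rintro ⟨v, hv, rfl⟩
      have := hφ v hv
      simp only [mem_between, Set.mem_singleton_iff] at *; grind
  rw [this]
  refine Set.InjOn.ncard_image fun u hu v hv huv => ?_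
  have h1 := hφ u hu
  have h2 := hφ v hv
  simp only [mem_between, Set.mem_singleton_iff, Set.mem_sdiff] at *
  grind

theorem IsStrip.ncard_inside [Fintype V] [Fintype E] (h : G.IsStrip H Q f g) :
    (G.inside H).ncard = (G.inside (H \ Q)).ncard + (G.inside Q).ncard + Q.ncard := by
  have hQH : ∀ v ∈ Q, v ∈ H := h.subset
  have : G.inside H = (G.inside (H \ Q) ∪ G.inside Q) ∪ G.between Q (H \ Q) := by
    ext x; simp only [mem_inside, mem_between, Set.mem_union, Set.mem_sdiff]; grind
  rw [this, Set.ncard_union_eq, Set.ncard_union_eq, h.ncard_between]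
  all_goals
    rw [Set.disjoint_left]
    intro x
    simp only [mem_inside, mem_between, Set.mem_union, Set.mem_sdiff]; grind

theorem IsStrip.ncard_eq [Fintype V] (h : G.IsStrip H Q f g) :
    H.ncard = (H \ Q).ncard + Q.ncard :=
  (Set.ncard_sdiff_add_ncard_of_subset h.subset).symm

theorem IsStrip.isPartialBase [Fintype V] [Fintype E] {r : V} {Y : Set V} {e x : E} {B : Set E}
    (h : G.IsStrip H Q f g)
    (hcl : ∀ R, G.ClosedAvoiding r R → G.inside Y ⊆ R → G.inside Q ⊆ R → G.inside (Y ∪ Q) ⊆ R)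
    (hx : x ∈ G.inside (H ∪ Y) → x = e) (hB : G.IsPartialBase r (H \ Q) (Y ∪ Q) x B) :
    G.IsPartialBase r H Y e (B ∪ G.inside Q) := by
  have hQH : ∀ v ∈ Q, v ∈ H := h.subset
  have hBK : ∀ x ∈ B, x ∈ G.inside (H \ Q) := hB.subset
  have hT : G.inside H \ (B ∪ G.inside Q) =
      (G.inside (H \ Q) \ B) ∪ G.between Q (H \ Q) := by
    ext x
    have := hBK x
    simp only [mem_inside, mem_between, Set.mem_sdiff, Set.mem_union] at *
    grind
  refine ⟨?_, ?_, ?_, ?_⟩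
  · rintro x (hx | hx)
    · exact ⟨(hBK x hx).1.1, (hBK x hx).2.1⟩
    · exact ⟨hQH _ hx.1, hQH _ hx.2⟩
  · rw [hT]
    refine LinkedBy.of_subset (K := H \ Q) (hB.linked.mono Set.subset_union_left)
      Set.sdiff_subset ?_
    rintro A hA ⟨a, ha⟩
    have hAQ : ∀ v ∈ A, v ∈ Q := fun v hv => by
      have := hA hv
      simp only [Set.mem_sdiff] at this; tauto
    obtain ⟨d, hd, -⟩ := h.existsUnique a (hAQ a ha)
    refine ⟨d, Or.inr ?_, ?_⟩ <;>
    · simp only [mem_between, Set.mem_sdiff, Set.mem_singleton_iff] at *; grind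
  · rw [hT, Set.ncard_union_eq, h.ncard_between, h.ncard_eq, ← hB.ncard]
    · ring
    · rw [Set.disjoint_left]
      intro x
      simp only [mem_inside, mem_between, Set.mem_sdiff]; grind
  · intro R hR hBR hYR d hd
    refine hB.closure R hR (fun y hy => hBR (Or.inl hy))
      (hcl R hR hYR fun y hy => hBR (Or.inr hy)) ⟨?_, fun hdx => ?_⟩
    · have := hd.1
      simp only [mem_inside, Set.mem_sdiff, Set.mem_union] at *; grind
    · cases hdx; exact hd.2 (hx hd.1)

end Strip

/-- `G[H]` has many partial bases, compared to the dimension of its cycle space. -/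
def ManyBases (G : Multigraph V E) (r : V) (c : ℕ) (H Y : Set V) (e : E) : Prop :=
  ∃ k, 2 ^ k ≤ {B | G.IsPartialBase r H Y e B}.ncard ∧
    (G.inside H).ncard + 1 ≤ H.ncard + k * c

theorem ManyBases.mono [Fintype E] {r : V} {c : ℕ} {H Y Y' : Set V} {e e' : E}
    (h : G.ManyBases r c H Y e)
    (hsub : ∀ B, G.IsPartialBase r H Y e B → G.IsPartialBase r H Y' e' B) :
    G.ManyBases r c H Y' e' := by
  obtain ⟨k, h1, h2⟩ := h
  exact ⟨k, h1.trans (Set.ncard_le_ncard hsub), h2⟩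

theorem ManyBases.union_of_bridge [Fintype V] [Fintype E] {r : V} {c : ℕ} {D D' Y : Set V}
    {e b : E} (hDD' : Disjoint D D') (hDY : Disjoint D Y)
    (hD'Y : Disjoint D' Y) (hb : G.between D D' = {b})
    (h : G.ManyBases r c D Y b) (h' : G.ManyBases r c D' (Y ∪ D) e) :
    G.ManyBases r c (D ∪ D') Y e := by
  obtain ⟨k, h1, h2⟩ := h
  obtain ⟨k', h1', h2'⟩ := h'
  have hdis : ∀ v ∈ D, v ∉ D' := fun v h h' => Set.disjoint_left.1 hDD' h h'
  refine ⟨k + k', ?_, ?_⟩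
  · rw [pow_add]
    refine (Nat.mul_le_mul h1 h1').trans ?_
    rw [← Set.ncard_prod]
    refine Set.ncard_le_ncard_of_injOn (fun p => p.1 ∪ p.2)
      (fun p hp => hp.1.union_of_bridge hDD' hDY hD'Y hb hp.2) ?_
    rintro ⟨B, B'⟩ ⟨hB, hB'⟩ ⟨C, C'⟩ ⟨hC, hC'⟩ heq
    have e1 : ∀ x, x ∈ B ∪ B' ↔ x ∈ C ∪ C' := fun x => by simp only at heq; rw [heq]
    have s1 : ∀ x ∈ B, x ∈ G.inside D := hB.subset
    have s2 : ∀ x ∈ B', x ∈ G.inside D' := hB'.subset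
    have s3 : ∀ x ∈ C, x ∈ G.inside D := hC.subset
    have s4 : ∀ x ∈ C', x ∈ G.inside D' := hC'.subset
    simp only [Set.mem_union, mem_inside] at *
    ext x <;> grind
  · have : G.inside (D ∪ D') = insert b (G.inside D ∪ G.inside D') := by
      ext x
      have : x ∈ G.between D D' ↔ x = b := by rw [hb]; rfl
      simp only [mem_inside, mem_between, Set.mem_union, Set.mem_insert_iff] at *
      grind
    rw [this, Set.ncard_union_eq hDD']
    have h3 := Set.ncard_insert_le b (G.inside D ∪ G.inside D')
    have h4 := Set.ncard_union_le (G.inside D) (G.inside D')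
    rw [add_mul]
    omega

theorem ManyBases.of_two_strips [Fintype V] [Fintype E] {r : V} {c : ℕ} {H Y Q Q' : Set V}
    {e x x' f g f' g' : E} (h : G.IsStrip H Q f g) (h' : G.IsStrip H Q' f' g')
    (hc : (G.inside Q).ncard ≤ c) (hc' : (G.inside Q').ncard ≤ c)
    (hinter : (Q ∩ Q').Nonempty) (hne : Q ≠ Q')
    (hbase : ∀ B, G.IsPartialBase r (H \ Q) (Y ∪ Q) x B → G.IsPartialBase r H Y e (B ∪ G.inside Q))
    (hbase' : ∀ B, G.IsPartialBase r (H \ Q') (Y ∪ Q') x' B →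
      G.IsPartialBase r H Y e (B ∪ G.inside Q'))
    (hm : G.ManyBases r c (H \ Q) (Y ∪ Q) x) (hm' : G.ManyBases r c (H \ Q') (Y ∪ Q') x') :
    G.ManyBases r c H Y e := by
  have hinj : ∀ A : Set V, Set.InjOn (fun B => B ∪ G.inside A)
      {B | B ⊆ G.inside (H \ A)} := by
    intro A B hB C hC heq
    have e1 : ∀ x, x ∈ B ∪ G.inside A ↔ x ∈ C ∪ G.inside A := fun x => by
      simp only at heq; rw [heq]
    have s1 : ∀ x ∈ B, x ∈ G.inside (H \ A) := hB
    have s2 : ∀ x ∈ C, x ∈ G.inside (H \ A) := hC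
    simp only [Set.mem_union, mem_inside, Set.mem_sdiff] at *
    ext x; grind
  have hsep : ∀ A A' : Set V, G.Linked A' → (A ∩ A').Nonempty → ¬ A' ⊆ A →
      ∀ B ⊆ G.inside (H \ A), ∀ B' : Set E, B ∪ G.inside A ≠ B' ∪ G.inside A' := by
    intro A A' hlink hAA hsub B hB B' heq
    obtain ⟨v, hv, hvA⟩ := Set.not_subset.1 hsub
    obtain ⟨d, -, hd⟩ := hlink (A ∩ A') Set.inter_subset_right hAA ⟨v, hv, fun h => hvA h.1⟩
    have h1 : d ∈ B ∪ G.inside A := by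
      rw [heq]; right
      simp only [mem_between, mem_inside, Set.mem_inter_iff, Set.mem_sdiff] at *; grind
    have s1 : d ∈ B → d ∈ G.inside (H \ A) := fun h => hB h
    simp only [mem_between, mem_inside, Set.mem_inter_iff, Set.mem_sdiff, Set.mem_union] at *
    grind
  obtain ⟨k, h1, h2⟩ := hm
  obtain ⟨k', h1', h2'⟩ := hm'
  have e1 := h.ncard_inside
  have e1' := h'.ncard_inside
  have e2 := h.ncard_eq
  have e2' := h'.ncard_eq
  refine ⟨min k k' + 1, ?_, ?_⟩
  · set F := {B | G.IsPartialBase r (H \ Q) (Y ∪ Q) x B} with hF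
    set F' := {B | G.IsPartialBase r (H \ Q') (Y ∪ Q') x' B} with hF'
    have hdisj : Disjoint ((fun B => B ∪ G.inside Q) '' F) ((fun B => B ∪ G.inside Q') '' F') := by
      rw [Set.disjoint_left]
      rintro _ ⟨B, hB, rfl⟩ ⟨B', hB', heq⟩
      by_cases hsub : Q' ⊆ Q
      · refine hsep Q' Q h.linked (by rwa [Set.inter_comm]) (fun hs => hne (hs.antisymm hsub)) B'
          hB'.subset B heq
      · exact hsep Q Q' h'.linked hinter hsub B hB.subset B' heq.symm
    have hsubset : (fun B => B ∪ G.inside Q) '' F ∪ (fun B => B ∪ G.inside Q') '' F' ⊆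
        {B | G.IsPartialBase r H Y e B} := by
      rintro _ (⟨B, hB, rfl⟩ | ⟨B, hB, rfl⟩)
      exacts [hbase B hB, hbase' B hB]
    have h3 := Set.ncard_le_ncard hsubset
    rw [Set.ncard_union_eq hdisj, Set.InjOn.ncard_image ((hinj Q).mono fun B hB => hB.subset),
      Set.InjOn.ncard_image ((hinj Q').mono fun B hB => hB.subset)] at h3
    have h4 := Nat.pow_le_pow_right (n := 2) (by norm_num) (min_le_left k k')
    have h5 := Nat.pow_le_pow_right (n := 2) (by norm_num) (min_le_right k k')
    rw [pow_succ]
    omega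
  · rcases min_choice k k' with hk | hk <;> rw [hk, add_mul] <;> omega

/-- The subgraph induced on `H` has no edge cut with at most one edge. -/
def Bridgeless (G : Multigraph V E) (H : Set V) : Prop :=
  ∀ U ⊆ H, U.Nonempty → (H \ U).Nonempty → ∀ b, ¬ G.between U (H \ U) ⊆ {b}

theorem Bridgeless.exists_ne {H U : Set V} (h : G.Bridgeless H) (hU : U ⊆ H) (hne : U.Nonempty)
    (hne' : (H \ U).Nonempty) (b : E) : ∃ x ∈ G.between U (H \ U), x ≠ b := by
  obtain ⟨x, hx, hxb⟩ := Set.not_subset.1 (h U hU hne hne' b)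
  exact ⟨x, hx, hxb⟩

theorem Bridgeless.linked_diff_singleton [Finite E] (hG : G.IsCubicThreeEdgeConnected) {H : Set V}
    (h : G.Bridgeless H) (v : V) (hv : v ∈ H) : G.Linked (H \ {v}) := by
  intro A hA h1 h2
  by_contra! hcon
  have hA' : ∀ x ∈ A, x ∈ H ∧ x ≠ v := fun x hx => hA hx
  have hAH : A ⊆ H := fun x hx => (hA hx).1
  have hne' : (H \ A).Nonempty := ⟨v, hv, fun hvA => (hA' v hvA).2 rfl⟩
  obtain ⟨b, -⟩ := Set.nonempty_of_ncard_ne_zero (by rw [hG.ncard_incident v]; decide)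
  obtain ⟨x, hx, -⟩ := h.exists_ne hAH h1 hne' b
  obtain ⟨y, hy, hyx⟩ := h.exists_ne hAH h1 hne' x
  have hat : ∀ t ∈ G.between A (H \ A), G.src t = v ∨ G.tgt t = v := by
    intro t ht
    have := hcon t trivial
    clear hcon
    simp only [mem_between, Set.mem_sdiff, Set.mem_singleton_iff] at *
    grind
  obtain ⟨z, hz, hzx, hzy⟩ := hG.exists_third v x y
  have hUH : insert v A ⊆ H := Set.insert_subset hv hAH
  refine h (insert v A) hUH ⟨v, Or.inl rfl⟩ ?_ z ?_
  · obtain ⟨u, hu⟩ := h2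
    exact ⟨u, hu.1.1, by rintro (rfl | h3); exacts [hu.1.2 rfl, hu.2 h3]⟩
  · intro t ht
    have htb := hcon t trivial
    by_cases htv : G.src t = v ∨ G.tgt t = v
    · rcases hG.eq_or_eq_or_eq (hat x hx) (hat y hy) hz htv hyx.symm hzx.symm hzy.symm with rfl | rfl | rfl
      · clear hcon hat h
        simp only [mem_between, Set.mem_sdiff, Set.mem_insert_iff, Set.mem_singleton_iff] at *
        grind
      · clear hcon hat h
        simp only [mem_between, Set.mem_sdiff, Set.mem_insert_iff, Set.mem_singleton_iff] at *
        grind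
      · rfl
    · clear hcon hat h
      simp only [mem_between, Set.mem_sdiff, Set.mem_insert_iff, Set.mem_singleton_iff] at *
      grind

/-- If `H` has no cut vertex, then a connected part `K` can be split into two connected parts
containing two prescribed vertices, both adjacent to the rest of `H`. -/
theorem exists_split [Finite V] {H K : Set V} {w c : V} (hH : ∀ v ∈ H, G.Linked (H \ {v}))
    (hKH : K ⊆ H) (hne : (H \ K).Nonempty) (hK : G.Linked K) (hw : w ∈ K) (hc : c ∈ K)
    (hwc : w ≠ c) : ∃ J ⊆ K, c ∈ J ∧ w ∉ J ∧ G.Linked J ∧ G.Linked (K \ J) ∧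
      (∃ x, x ∈ G.between J (H \ K)) ∧ ∃ y, y ∈ G.between (K \ J) (H \ K) := by
  have hKH' : ∀ x ∈ K, x ∈ H := hKH
  obtain ⟨J₀, hJ₀⟩ : ∃ J, J ⊆ K ∧ c ∈ J ∧ w ∉ J ∧ G.Linked J ∧ G.Linked (K \ J) ∧
      ∃ x, x ∈ G.between J (H \ K) := by
    obtain ⟨C, h1, h2, h3, h4, h5⟩ := exists_far_side hK (linkedBy_singleton Set.univ c)
      (by simpa using ⟨hc, hwc.symm⟩ : {c} ⊆ K \ {w}) hw
    have h2' : ∀ x ∈ C, x ∈ K ∧ x ≠ w := fun x hx => h2 hx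
    refine ⟨C, fun x hx => (h2 hx).1, h1 rfl, fun h => (h2' w h).2 rfl, h3, h4, ?_⟩
    obtain ⟨u, hu⟩ := hne
    obtain ⟨x, -, hx⟩ := hH w (hKH hw) C (fun x hx => ⟨hKH (h2' x hx).1, (h2' x hx).2⟩) ⟨c, h1 rfl⟩
      ⟨u, ⟨hu.1, by rintro rfl; exact hu.2 hw⟩, fun h => hu.2 (h2' u h).1⟩
    refine ⟨x, ?_⟩
    have := h5 x
    simp only [mem_between, Set.mem_sdiff, Set.mem_singleton_iff] at *
    grind
  obtain ⟨J, -, ⟨hJ, hmin⟩⟩ := (Set.toFinite {J | J ⊆ K ∧ c ∈ J ∧ w ∉ J ∧ G.Linked J ∧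
    G.Linked (K \ J) ∧ ∃ x, x ∈ G.between J (H \ K)}).exists_le_minimal hJ₀
  obtain ⟨hJK, hcJ, hwJ, hJl, hKJ, x₀, hx₀⟩ := hJ
  refine ⟨J, hJK, hcJ, hwJ, hJl, hKJ, ⟨x₀, hx₀⟩, ?_⟩
  by_contra! hcon
  have hJK' : ∀ x ∈ J, x ∈ K := hJK
  obtain ⟨u, hu⟩ := hne
  have hatt : ∃ v ∈ J \ {c}, ∃ t, t ∈ G.between {v} (K \ J) := by
    obtain ⟨t, -, ht⟩ := hH c (hKH hc) (K \ J) (fun x hx => ⟨hKH hx.1, fun h => hx.2 (h ▸ hcJ)⟩)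
      ⟨w, hw, hwJ⟩ ⟨u, ⟨hu.1, by rintro rfl; exact hu.2 hc⟩, fun h => hu.2 h.1⟩
    have := hcon t
    rcases ht with ht | ht
    · exact ⟨G.tgt t, by simp only [mem_between, Set.mem_sdiff, Set.mem_singleton_iff] at *; grind,
        t, Or.inr ⟨ht.1, rfl⟩⟩
    · exact ⟨G.src t, by simp only [mem_between, Set.mem_sdiff, Set.mem_singleton_iff] at *; grind,
        t, Or.inl ⟨rfl, ht.2⟩⟩
  have hside : ∀ v ∈ J \ {c}, (∃ t, t ∈ G.between {v} (K \ J)) →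
      ∃ C, c ∈ C ∧ C ⊆ J \ {v} ∧ G.Linked C ∧ (∀ e, e ∉ G.between C ((J \ {v}) \ C)) ∧
        ∀ t, t ∉ G.between C (H \ K) := by
    rintro v ⟨hvJ, hvc⟩ ⟨t, ht⟩
    obtain ⟨C, h1, h2, h3, h4, h5⟩ := exists_far_side hJl (linkedBy_singleton Set.univ c)
      (by simpa using ⟨hcJ, Ne.symm hvc⟩ : {c} ⊆ J \ {v}) hvJ
    have h2' : ∀ x ∈ C, x ∈ J ∧ x ≠ v := fun x hx => h2 hx
    refine ⟨C, h1 rfl, h2, h3, h5, fun s hs => ?_⟩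
    have hle := hmin (y := C) ⟨fun x hx => hJK (h2 hx).1, h1 rfl, fun h => hwJ (h2 h).1, h3, ?_, s, hs⟩
      (fun x hx => (h2 hx).1)
    · exact (h2' v (hle hvJ)).2 rfl
    · have := hKJ.union h4 (e := t) trivial (by
        have := fun h => (h2' v h).2 rfl
        clear hmin hcon hH h5
        simp only [mem_between, Set.mem_sdiff, Set.mem_singleton_iff] at *; grind)
      convert this using 1
      ext x
      simp only [Set.mem_sdiff, Set.mem_union]
      have := h2' x
      have := hJK' x
      tauto
  obtain ⟨C, ⟨v, hv, ht, hcC, hCJ, hC, hCcl, hCQ⟩, hmax⟩ := (Set.toFinite {C | ∃ v ∈ J \ {c},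
    (∃ t, t ∈ G.between {v} (K \ J)) ∧ c ∈ C ∧ C ⊆ J \ {v} ∧ G.Linked C ∧
      (∀ e, e ∉ G.between C ((J \ {v}) \ C)) ∧ ∀ t, t ∉ G.between C (H \ K)}).exists_maximal (by
      obtain ⟨v, hv, ht⟩ := hatt
      obtain ⟨C, hC⟩ := hside v hv ht
      exact ⟨C, v, hv, ht, hC⟩)
  have hCJ' : ∀ x ∈ C, x ∈ J ∧ x ≠ v := fun x hx => hCJ hx
  have hothers : ∀ u ∈ J, (∃ t, t ∈ G.between {u} (K \ J)) → u ≠ v → u ∈ C := by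
    intro u huJ hut huv
    by_contra huC
    have huc : u ≠ c := by rintro rfl; exact huC hcC
    obtain ⟨C', g1, g2, g3, g4, g5⟩ := hside u ⟨huJ, huc⟩ hut
    have hCC' : C ⊆ C' := hC.subset_of_meets (S := J \ {u}) (fun x hx => ⟨(hCJ hx).1, by
      rintro rfl; exact huC hx⟩) (fun e he => absurd he (g4 e)) ⟨c, hcC, g1⟩
    obtain ⟨s, -, hs⟩ := hJl C (fun x hx => (hCJ hx).1) ⟨c, hcC⟩ ⟨v, hv.1, fun h => (hCJ' v h).2 rfl⟩
    have hvC' : v ∈ C' := by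
      have h1 := hCcl s
      have h2 := g4 s
      have hCC : ∀ x ∈ C, x ∈ C' := hCC'
      have hv1 := hv.1
      clear hmin hcon hH hside hmax hut ht hCcl g4 g5 hCQ
      simp only [mem_between, Set.mem_sdiff, Set.mem_singleton_iff] at *; grind
    have := hmax (y := C') ⟨u, ⟨huJ, huc⟩, hut, g1, g2, g3, g4, g5⟩ hCC'
    exact (hCJ' v (this hvC')).2 rfl
  obtain ⟨t, -, htb⟩ := hH v (hKH (hJK hv.1)) ((K \ J) ∪ C)
    (by
      rintro x (hx | hx)
      · exact ⟨hKH hx.1, by rintro rfl; exact hx.2 hv.1⟩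
      · exact ⟨hKH (hJK (hCJ hx).1), (hCJ hx).2⟩)
    ⟨c, Or.inr hcC⟩ ⟨u, ⟨hu.1, by rintro rfl; exact hu.2 (hJK hv.1)⟩, by
      rintro (h | h)
      exacts [hu.2 h.1, hu.2 (hJK (hCJ h).1)]⟩
  have h1 := hCcl t
  have h2 := hCQ t
  have h3 := hcon t
  have h4 := fun h1 h2 => hothers (G.src t) h1 ⟨t, h2⟩
  have h5 := fun h1 h2 => hothers (G.tgt t) h1 ⟨t, h2⟩
  clear hmin hcon hH hside hmax ht hCcl hCQ hothers hatt
  simp only [mem_between, Set.mem_sdiff, Set.mem_singleton_iff, Set.mem_union] at *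
  grind

/-- The situation met when the partial bases are constructed part by part: `H` is still to be
processed, all its boundary edges except `e` lead to the processed part `Y`, or nothing has been
processed and `H` has exactly three boundary edges. -/
structure IsFrontier (G : Multigraph V E) (r : V) (H Y : Set V) (e : E) : Prop where
  nonempty : H.Nonempty
  linked : G.Linked H
  linked_compl : G.Linked Hᶜ
  linked_done : G.Linked Y
  disjoint : Disjoint H Y
  root_notMem : r ∉ H
  root_notMem_done : r ∉ Y
  mem_cut : e ∈ G.cutEdges H
  boundary : (Y = ∅ ∧ (G.cutEdges H).ncard = 3) ∨
    ∀ t ∈ G.cutEdges H, t ≠ e → t ∈ G.between H Y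

section

variable {H Y Q : Set V} {r : V} {e f g x : E}

theorem IsFrontier.diff_strip (hF : G.IsFrontier r H Y e) (h : G.IsStrip H Q f g)
    (hx : x ∈ G.cutEdges H) (hxQ : ¬ G.Meets x Q)
    (hcase : (Y = ∅ ∧ ∀ t ∈ G.cutEdges H, t = f ∨ t = g ∨ t = x) ∨
      (x = e ∧ ∀ t ∈ G.cutEdges H, t ≠ e → t ∈ G.between H Y)) :
    G.IsFrontier r (H \ Q) (Y ∪ Q) x := by
  have hQH : ∀ v ∈ Q, v ∈ H := h.subset
  have hHY : ∀ v ∈ H, v ∉ Y := fun v hv hv' => Set.disjoint_left.1 hF.disjoint hv hv'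
  have hfc := h.left_mem
  have hfQ := h.meets_left
  have hgc := h.right_mem
  have hgQ := h.meets_right
  have hrH := hF.root_notMem
  have hrY := hF.root_notMem_done
  refine ⟨h.rest_nonempty, h.linked_rest, ?_, ?_, ?_, fun hr => hrH hr.1, ?_, ?_, Or.inr ?_⟩
  · have : (H \ Q)ᶜ = Hᶜ ∪ Q := by
      ext v; simp only [Set.mem_compl_iff, Set.mem_sdiff, Set.mem_union]; tauto
    rw [this]
    refine hF.linked_compl.union h.linked (e := f) trivial ?_
    simp only [mem_between, mem_cutEdges, Meets, Set.mem_compl_iff] at *; grind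
  · rcases hcase with ⟨rfl, -⟩ | ⟨rfl, hb⟩
    · rw [Set.empty_union]; exact h.linked
    · refine hF.linked_done.union h.linked (e := f) trivial ?_
      have := hb f hfc (by rintro rfl; exact hxQ hfQ)
      simp only [mem_between, mem_cutEdges, Meets] at *; grind
  · rw [Set.disjoint_left]
    rintro v hv (hv' | hv')
    exacts [hHY v hv.1 hv', hv.2 hv']
  · rintro (hr | hr)
    exacts [hrY hr, hrH (hQH _ hr)]
  · simp only [mem_cutEdges, Meets, Set.mem_sdiff] at *; grind
  · intro t ht htx
    by_cases htQ : G.Meets t Q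
    · simp only [mem_between, mem_cutEdges, Meets, Set.mem_sdiff, Set.mem_union] at *; grind
    · have htH : t ∈ G.cutEdges H := by
        simp only [mem_cutEdges, Meets, Set.mem_sdiff] at *; grind
      rcases hcase with ⟨rfl, h3⟩ | ⟨rfl, hb⟩
      · rcases h3 t htH with rfl | rfl | rfl
        exacts [absurd hfQ htQ, absurd hgQ htQ, absurd rfl htx]
      · have := hb t htH htx
        simp only [mem_between, Meets, Set.mem_sdiff, Set.mem_union] at *; grind

theorem IsFrontier.isPartialBase_union [Fintype V] [Fintype E]
    (hG : G.IsCubicThreeEdgeConnected) (hF : G.IsFrontier r H Y e) (h : G.IsStrip H Q f g)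
    (hx : x ∈ G.cutEdges H) (hxQ : ¬ G.Meets x Q)
    (hcase : (Y = ∅ ∧ ∀ t ∈ G.cutEdges H, t = f ∨ t = g ∨ t = x) ∨
      (x = e ∧ ∀ t ∈ G.cutEdges H, t ≠ e → t ∈ G.between H Y)) {B : Set E}
    (hB : G.IsPartialBase r (H \ Q) (Y ∪ Q) x B) :
    G.IsPartialBase r H Y e (B ∪ G.inside Q) := by
  have hQH : ∀ v ∈ Q, v ∈ H := h.subset
  have hHY : ∀ v ∈ H, v ∉ Y := fun v hv hv' => Set.disjoint_left.1 hF.disjoint hv hv'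
  have hfQ := h.meets_left
  have hgQ := h.meets_right
  refine h.isPartialBase ?_ ?_ hB
  · intro R hR hYR hQR
    rcases hcase with ⟨rfl, -⟩ | ⟨rfl, hb⟩
    · rwa [Set.empty_union]
    · have hbet : ∀ t ∈ G.cutEdges H, G.Meets t Q → t ∈ G.between Y Q := by
        intro t ht htQ
        have := hb t ht (by rintro rfl; exact hxQ htQ)
        clear hb
        simp only [mem_between, mem_cutEdges, Meets] at *; grind
      have hf := hbet f h.left_mem hfQ
      have hg := hbet g h.right_mem hgQ
      have hYQ : Disjoint Y Q := (hF.disjoint.mono_left h.subset).symm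
      intro t ht
      by_cases h1 : t ∈ G.inside Y
      · exact hYR h1
      by_cases h2 : t ∈ G.inside Q
      · exact hQR h2
      have htb : t ∈ G.between Y Q := by
        simp only [mem_between, mem_inside, Set.mem_union] at *; grind
      have hrQ : r ∉ Q := fun hr => hF.root_notMem (hQH r hr)
      by_cases htf : t = f
      · exact hR.mem_between hG hF.root_notMem_done hrQ hF.linked_done h.linked hYQ hYR hQR htb hg
          (htf ▸ h.ne.symm)
      · exact hR.mem_between hG hF.root_notMem_done hrQ hF.linked_done h.linked hYQ hYR hQR htb hf
          htf
  · intro hxi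
    rcases hcase with ⟨rfl, -⟩ | ⟨rfl, hb⟩
    · simp only [mem_inside, mem_cutEdges, Set.mem_union] at *; grind
    · rfl

theorem Bridgeless.eq_of_mem_cutEdges [Finite E] (hG : G.IsCubicThreeEdgeConnected)
    (h : G.Bridgeless H) {v : V} {a b : E} (hv : v ∈ H) (hne : (H \ {v}).Nonempty)
    (ha : a ∈ G.cutEdges H) (hb : b ∈ G.cutEdges H) (hav : G.src a = v ∨ G.tgt a = v)
    (hbv : G.src b = v ∨ G.tgt b = v) : a = b := by
  by_contra hab
  obtain ⟨z, hz, hza, hzb⟩ := hG.exists_third v a b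
  refine h {v} (by simpa) ⟨v, rfl⟩ hne z fun t ht => ?_
  have htv : G.src t = v ∨ G.tgt t = v := by
    simp only [mem_between, Set.mem_singleton_iff] at ht; grind
  clear h
  rcases hG.eq_or_eq_or_eq hav hbv hz htv hab hza.symm hzb.symm with rfl | rfl | rfl
  · simp only [mem_between, mem_cutEdges, Set.mem_singleton_iff, Set.mem_sdiff] at *; grind
  · simp only [mem_between, mem_cutEdges, Set.mem_singleton_iff, Set.mem_sdiff] at *; grind
  · rfl

theorem exists_end_of_mem_cutEdges {a : E} (ha : a ∈ G.cutEdges H) :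
    ∃ v ∈ H, G.src a = v ∨ G.tgt a = v := by
  rcases ha with ha | ha
  exacts [⟨_, ha.1, Or.inl rfl⟩, ⟨_, ha.2, Or.inr rfl⟩]

theorem Bridgeless.exists_isStrip [Finite V] [Finite E] (hG : G.IsCubicThreeEdgeConnected)
    (hB : G.Bridgeless H) (hl : G.Linked H) (hne : H.Nontrivial) {a b c : E}
    (ha : a ∈ G.cutEdges H) (hb : b ∈ G.cutEdges H) (hc : c ∈ G.cutEdges H) (hab : a ≠ b)
    (hac : a ≠ c) (hbc : b ≠ c) : ∃ Q g, G.IsStrip H Q a g ∧ ¬ G.Meets c Q := by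
  obtain ⟨v, hv, hcv⟩ := exists_end_of_mem_cutEdges hc
  have hne' : (H \ {v}).Nonempty := by
    obtain ⟨u, hu, huv⟩ := hne.exists_ne v
    exact ⟨u, hu, huv⟩
  have hmeet : ∀ t ∈ G.cutEdges H, t ≠ c → G.Meets t (H \ {v}) := by
    intro t ht htc
    have := fun htv => htc (hB.eq_of_mem_cutEdges hG hv hne' ht hc htv hcv)
    simp only [Meets, mem_cutEdges, Set.mem_sdiff, Set.mem_singleton_iff] at *; grind
  obtain ⟨Q, g, h1, h2⟩ := Multigraph.exists_isStrip hG hl (linkedBy_singleton Set.univ v) ⟨v, rfl⟩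
    (by simpa) (subset_refl (H \ {v})) ha
    ⟨hB.linked_diff_singleton hG v hv, hmeet a ha hac, b, hb, hab.symm, hmeet b hb hbc⟩
    (fun U hU hUne _ => hB U (fun x hx => (hU hx).1) hUne ⟨v, hv, fun h => (hU h).2 rfl⟩)
  have hQ : v ∉ Q := (h2 rfl).2
  have hQH : ∀ v ∈ Q, v ∈ H := h1.subset
  refine ⟨Q, g, h1, ?_⟩
  clear hmeet
  simp only [Meets, mem_cutEdges] at *; grind

end

section

variable {H Y : Set V} {r : V} {e : E}

/-- If at most one edge joins two parts of a connected set, both parts are connected. -/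
theorem Linked.of_bridge {D : Set V} {b : E} (hH : G.Linked H) (hD : D ⊆ H)
    (hne : (H \ D).Nonempty) (hb : G.between D (H \ D) ⊆ {b}) : G.Linked D := by
  intro A hA h1 h2
  by_contra! hcon
  have hD' : ∀ v ∈ D, v ∈ H := hD
  have hA' : ∀ v ∈ A, v ∈ D := hA
  obtain ⟨u, hu⟩ := hne
  obtain ⟨s, -, hs⟩ := hH A (hA.trans hD) h1 ⟨u, hu.1, fun h => hu.2 (hA h)⟩
  obtain ⟨t, -, ht⟩ := hH (D \ A) (fun v hv => hD hv.1) h2 ⟨u, hu.1, fun h => hu.2 h.1⟩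
  have h3 := hcon s trivial
  have h4 := hcon t trivial
  have h5 := @hb s
  have h6 := @hb t
  clear hcon hb hH
  simp only [mem_between, Set.mem_sdiff, Set.mem_singleton_iff] at *
  grind

theorem manyBases_singleton [Finite E] (hG : G.IsCubicThreeEdgeConnected)
    (c : ℕ) (w : V) : G.ManyBases r c {w} ∅ e := by
  have hin : G.inside {w} = ∅ := by
    ext t
    have := hG.src_ne_tgt t
    simp only [mem_inside, Set.mem_singleton_iff, Set.mem_empty_iff_false]
    grind
  refine ⟨0, ?_, by simp [hin]⟩
  refine (Set.ncard_pos).2 ⟨∅, by simp, linkedBy_singleton _ w, by simp [hin], fun R _ _ _ => by simp [hin]⟩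

theorem bridgeless_of_ncard_eq_three [Finite E] (hG : G.IsCubicThreeEdgeConnected)
    (h3 : (G.cutEdges H).ncard = 3) : G.Bridgeless H := by
  intro D hD h1 h2 b hb
  have hD' : ∀ v ∈ D, v ∈ H := hD
  have key : ∀ A ⊆ H, A.Nonempty → (H \ A).Nonempty → G.between A (H \ A) ⊆ {b} →
      2 ≤ {t ∈ G.cutEdges H | G.Meets t A}.ncard := by
    intro A hA hA1 hA2 hAb
    have hA' : ∀ v ∈ A, v ∈ H := hA
    have h4 := hG.three_le_cut A hA1 (by
      obtain ⟨u, hu⟩ := hA2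
      exact ⟨u, hu.2⟩)
    have h5 : G.cutEdges A ⊆ insert b {t ∈ G.cutEdges H | G.Meets t A} := by
      intro t ht
      have := @hAb t
      simp only [mem_between, mem_cutEdges, Meets, Set.mem_insert_iff,
        Set.mem_singleton_iff, Set.mem_sdiff] at *
      grind
    have := (Set.ncard_le_ncard h5).trans (Set.ncard_insert_le _ _)
    omega
  have k1 := key D hD h1 h2 hb
  have hDD : H \ (H \ D) = D := Set.sdiff_sdiff_cancel_left hD
  have k2 := key (H \ D) Set.sdiff_subset h2 (by rwa [hDD]) (by rwa [hDD, between_comm])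
  have hdis : Disjoint {t ∈ G.cutEdges H | G.Meets t D} {t ∈ G.cutEdges H | G.Meets t (H \ D)} := by
    rw [Set.disjoint_left]
    intro t
    simp only [mem_cutEdges, Meets, Set.mem_sdiff]
    grind
  have k3 := Set.ncard_union_eq hdis
  have k4 : {t ∈ G.cutEdges H | G.Meets t D} ∪ {t ∈ G.cutEdges H | G.Meets t (H \ D)} ⊆
      G.cutEdges H := Set.union_subset (Set.sep_subset _ _) (Set.sep_subset _ _)
  have := Set.ncard_le_ncard k4
  omega

theorem IsFrontier.manyBases_of_bridge [Fintype V] [Fintype E] (hG : G.IsCubicThreeEdgeConnected)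
    {c : ℕ} (hF : G.IsFrontier r H Y e)
    (ih : ∀ H' Y' e', H'.ncard < H.ncard → G.IsFrontier r H' Y' e' → G.ManyBases r c H' Y' e')
    (hbd : ∀ t ∈ G.cutEdges H, t ≠ e → t ∈ G.between H Y) {D : Set V} {b : E} (hD : D ⊆ H)
    (h1 : D.Nonempty) (h2 : (H \ D).Nonempty) (hb : G.between D (H \ D) ⊆ {b})
    (heD : ¬ G.Meets e D) : G.ManyBases r c H Y e := by
  have hD' : ∀ v ∈ D, v ∈ H := hD
  have hDD : H \ (H \ D) = D := Set.sdiff_sdiff_cancel_left hD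
  have hHY : ∀ v ∈ H, v ∉ Y := fun v hv hv' => Set.disjoint_left.1 hF.disjoint hv hv'
  have hDl : G.Linked D := hF.linked.of_bridge hD h2 hb
  have hDl' : G.Linked (H \ D) := hF.linked.of_bridge Set.sdiff_subset (by rwa [hDD])
    (by rwa [hDD, between_comm])
  have hbeq : G.between D (H \ D) = {b} := by
    obtain ⟨t, -, ht⟩ := hF.linked D hD h1 h2
    have : t = b := hb ht
    exact hb.antisymm (by rintro _ rfl; exact this ▸ ht)
  have hbm : b ∈ G.between D (H \ D) := hbeq ▸ rfl
  have hec := hF.mem_cut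
  have hrH := hF.root_notMem
  have hrY := hF.root_notMem_done
  obtain ⟨s, hs⟩ : ∃ s, s ∈ G.between D Y := by
    obtain ⟨s, hs, hsb⟩ := Set.not_subset.1 (hG.not_cut_subset_pair h1 (S := D) (by
      obtain ⟨u, hu⟩ := h2
      exact ⟨u, hu.2⟩) b b)
    refine ⟨s, ?_⟩
    have h3 := @hb s
    have h4 := hbd s
    clear hb hbd ih
    simp only [mem_between, mem_cutEdges, Meets, Set.mem_sdiff, Set.mem_insert_iff,
      Set.mem_singleton_iff] at *
    grind
  have hF1 : G.IsFrontier r D Y b := by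
    refine ⟨h1, hDl, ?_, hF.linked_done, hF.disjoint.mono_left hD, fun h => hrH (hD h), hrY, ?_,
      Or.inr ?_⟩
    · have : Dᶜ = Hᶜ ∪ (H \ D) := by
        ext v
        have := hD' v
        simp only [Set.mem_compl_iff, Set.mem_sdiff, Set.mem_union]; tauto
      rw [this]
      refine hF.linked_compl.union hDl' (e := e) trivial ?_
      simp only [mem_between, mem_cutEdges, Meets, Set.mem_compl_iff, Set.mem_sdiff] at *; grind
    · simp only [mem_between, mem_cutEdges, Set.mem_sdiff] at *; grind
    · intro t ht htb
      have h3 := @hb t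
      have h4 := hbd t
      clear hb hbd ih
      simp only [mem_between, mem_cutEdges, Meets, Set.mem_sdiff, Set.mem_singleton_iff] at *
      grind
  have hF2 : G.IsFrontier r (H \ D) (Y ∪ D) e := by
    refine ⟨h2, hDl', ?_, ?_, ?_, fun h => hrH h.1, ?_, ?_, Or.inr ?_⟩
    · have : (H \ D)ᶜ = Hᶜ ∪ D := by
        ext v; simp only [Set.mem_compl_iff, Set.mem_sdiff, Set.mem_union]; tauto
      rw [this]
      refine hF.linked_compl.union hDl (e := s) trivial ?_
      simp only [mem_between, Set.mem_compl_iff] at *; grind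
    · exact hF.linked_done.union hDl (e := s) trivial (by rwa [between_comm])
    · rw [Set.disjoint_left]
      rintro v hv (hv' | hv')
      exacts [hHY v hv.1 hv', hv.2 hv']
    · rintro (h | h)
      exacts [hrY h, hrH (hD h)]
    · simp only [mem_cutEdges, Meets, Set.mem_sdiff] at *; grind
    · intro t ht hte
      have h4 := hbd t
      clear hb hbd ih
      simp only [mem_between, mem_cutEdges, Set.mem_sdiff, Set.mem_union] at *
      grind
  have hsum := Set.ncard_sdiff_add_ncard_of_subset hD
  have hp1 := (Set.ncard_pos).2 h1
  have hp2 := (Set.ncard_pos).2 h2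
  have := ManyBases.union_of_bridge Set.disjoint_sdiff_right (hF.disjoint.mono_left hD)
    (hF.disjoint.mono_left Set.sdiff_subset) hbeq (ih _ _ _ (by omega) hF1)
    (ih _ _ _ (by omega) hF2)
  rwa [Set.union_sdiff_cancel hD] at this

theorem IsFrontier.manyBases_of_two_strips [Fintype V] [Fintype E]
    (hG : G.IsCubicThreeEdgeConnected) {q : ℕ}
    (hq : ∀ C, G.IsCycle C → G.Peripheral C → C.ncard ≤ q) (hF : G.IsFrontier r H Y e)
    (ih : ∀ H' Y' e', H'.ncard < H.ncard → G.IsFrontier r H' Y' e' →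
      G.ManyBases r (q - 1) H' Y' e') {Q Q' : Set V} {f g f' g' x x' : E}
    (h : G.IsStrip H Q f g) (hx : x ∈ G.cutEdges H) (hxQ : ¬ G.Meets x Q)
    (hcase : (Y = ∅ ∧ ∀ t ∈ G.cutEdges H, t = f ∨ t = g ∨ t = x) ∨
      (x = e ∧ ∀ t ∈ G.cutEdges H, t ≠ e → t ∈ G.between H Y))
    (h' : G.IsStrip H Q' f' g') (hx' : x' ∈ G.cutEdges H) (hxQ' : ¬ G.Meets x' Q')
    (hcase' : (Y = ∅ ∧ ∀ t ∈ G.cutEdges H, t = f' ∨ t = g' ∨ t = x') ∨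
      (x' = e ∧ ∀ t ∈ G.cutEdges H, t ≠ e → t ∈ G.between H Y))
    (hfQ : G.Meets f' Q) (hne : Q ≠ Q') : G.ManyBases r (q - 1) H Y e := by
  have hQH : ∀ v ∈ Q, v ∈ H := h.subset
  have hQH' : ∀ v ∈ Q', v ∈ H := h'.subset
  have hlt : ∀ A ⊆ H, A.Nonempty → (H \ A).ncard < H.ncard := fun A hA hA' => by
    have := Set.ncard_sdiff_add_ncard_of_subset hA
    have := (Set.ncard_pos).2 hA'
    omega
  have hMne : ∀ {t : E} {A : Set V}, G.Meets t A → A.Nonempty := fun hm =>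
    hm.elim (fun h => ⟨_, h⟩) (fun h => ⟨_, h⟩)
  have hc := h.ncard_inside_lt hG hF.linked_compl hq
  have hc' := h'.ncard_inside_lt hG hF.linked_compl hq
  refine ManyBases.of_two_strips h h' (by omega) (by omega) ?_ hne
    (fun B => hF.isPartialBase_union hG h hx hxQ hcase)
    (fun B => hF.isPartialBase_union hG h' hx' hxQ' hcase')
    (ih _ _ _ (hlt _ h.subset (hMne hfQ)) (hF.diff_strip h hx hxQ hcase))
    (ih _ _ _ (hlt _ h'.subset (hMne h'.meets_left)) (hF.diff_strip h' hx' hxQ' hcase'))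
  have h1 := h'.meets_left
  have h2 := h'.left_mem
  simp only [Meets, mem_cutEdges] at h1 h2 hfQ
  by_cases hs : G.src f' ∈ H
  · exact ⟨G.src f', by grind, by grind⟩
  · exact ⟨G.tgt f', by grind, by grind⟩

theorem IsFrontier.manyBases_of_ncard_eq_three [Fintype V] [Fintype E]
    (hG : G.IsCubicThreeEdgeConnected) {q : ℕ}
    (hq : ∀ C, G.IsCycle C → G.Peripheral C → C.ncard ≤ q) (hF : G.IsFrontier r H ∅ e)
    (ih : ∀ H' Y' e', H'.ncard < H.ncard → G.IsFrontier r H' Y' e' →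
      G.ManyBases r (q - 1) H' Y' e') (h3 : (G.cutEdges H).ncard = 3) :
    G.ManyBases r (q - 1) H ∅ e := by
  rcases hF.nonempty.exists_eq_singleton_or_nontrivial with ⟨w, rfl⟩ | hnt
  · exact manyBases_singleton hG _ w
  have hB := bridgeless_of_ncard_eq_three hG h3
  have hec := hF.mem_cut
  obtain ⟨f₁, f₂, hf₁, hf₂, h12, h1e, h2e, hall⟩ : ∃ f₁ f₂, f₁ ∈ G.cutEdges H ∧
      f₂ ∈ G.cutEdges H ∧ f₁ ≠ f₂ ∧ f₁ ≠ e ∧ f₂ ≠ e ∧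
      ∀ t ∈ G.cutEdges H, t = e ∨ t = f₁ ∨ t = f₂ := by
    have h4 : (G.cutEdges H \ {e}).ncard = 2 := by
      rw [Set.ncard_sdiff_singleton_of_mem hec, h3]
    obtain ⟨f₁, f₂, h5, h6⟩ := Set.ncard_eq_two.1 h4
    have h7 : ∀ t, t ∈ G.cutEdges H \ {e} ↔ t = f₁ ∨ t = f₂ := fun t => by rw [h6]; rfl
    simp only [Set.mem_sdiff, Set.mem_singleton_iff] at h7
    exact ⟨f₁, f₂, by grind, by grind, h5, by grind, by grind, by grind⟩
  obtain ⟨Q, g, hQ, heQ⟩ := hB.exists_isStrip hG hF.linked hnt hf₂ hf₁ hec h12.symm h2e h1e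
  obtain ⟨Q', g', hQ', heQ'⟩ := hB.exists_isStrip hG hF.linked hnt hf₂ hec hf₁ h2e h12.symm h1e.symm
  have hg : g = f₁ := by
    rcases hall g hQ.right_mem with rfl | h | h
    exacts [absurd hQ.meets_right heQ, h, absurd h hQ.ne]
  have hg' : g' = e := by
    rcases hall g' hQ'.right_mem with h | rfl | h
    exacts [h, absurd hQ'.meets_right heQ', absurd h hQ'.ne]
  subst hg hg'
  refine hF.manyBases_of_two_strips hG hq ih hQ hec heQ (Or.inl ⟨rfl, ?_⟩) hQ' hf₁ heQ'
    (Or.inl ⟨rfl, ?_⟩) hQ.meets_left ?_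
  · grind
  · grind
  · rintro rfl
    exact heQ hQ'.meets_right

theorem IsFrontier.manyBases_of_bridgeless [Fintype V] [Fintype E]
    (hG : G.IsCubicThreeEdgeConnected) {q : ℕ}
    (hq : ∀ C, G.IsCycle C → G.Peripheral C → C.ncard ≤ q) (hF : G.IsFrontier r H Y e)
    (ih : ∀ H' Y' e', H'.ncard < H.ncard → G.IsFrontier r H' Y' e' →
      G.ManyBases r (q - 1) H' Y' e') (h3 : 4 ≤ (G.cutEdges H).ncard)
    (hbd : ∀ t ∈ G.cutEdges H, t ≠ e → t ∈ G.between H Y) (hB : G.Bridgeless H) :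
    G.ManyBases r (q - 1) H Y e := by
  have hnt : H.Nontrivial := by
    rcases hF.nonempty.exists_eq_singleton_or_nontrivial with ⟨w, rfl⟩ | hnt
    · exfalso
      have h4 := hG.ncard_incident w
      have h5 : G.cutEdges {w} ⊆ {e | G.src e = w ∨ G.tgt e = w} := by
        rintro t (ht | ht)
        exacts [Or.inl ht.1, Or.inr ht.2]
      have := Set.ncard_le_ncard h5
      omega
    · exact hnt
  have hec := hF.mem_cut
  have hex : ∀ a b c : E, ∃ t ∈ G.cutEdges H, t ≠ a ∧ t ≠ b ∧ t ≠ c := by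
    intro a b c
    by_contra! hcon
    have h4 : G.cutEdges H ⊆ {a, b, c} := by
      intro t ht
      simp only [Set.mem_insert_iff, Set.mem_singleton_iff]
      have := hcon t ht
      tauto
    have h5 := (Set.ncard_le_ncard h4).trans (Set.ncard_insert_le _ _)
    have h6 := Set.ncard_insert_le b {c}
    simp only [Set.ncard_singleton] at h6
    omega
  obtain ⟨a, ha, hae, -⟩ := hex e e e
  obtain ⟨b, hb, hbe, hba, -⟩ := hex e a a
  obtain ⟨Q, g, hQ, heQ⟩ := hB.exists_isStrip hG hF.linked hnt ha hb hec hba.symm hae hbe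
  obtain ⟨c, hc, hce, hca, hcg⟩ := hex e a g
  have hcQ : ¬ G.Meets c Q := fun h => (hQ.eq_or_eq c hc h).elim hca hcg
  have hQH : ∀ v ∈ Q, v ∈ H := hQ.subset
  obtain ⟨w, hwH, hew⟩ := exists_end_of_mem_cutEdges hec
  obtain ⟨u, huH, hcu⟩ := exists_end_of_mem_cutEdges hc
  have hwu : w ≠ u := by
    rintro rfl
    refine hce (hB.eq_of_mem_cutEdges hG hwH ?_ hc hec hcu hew)
    obtain ⟨v, hv, hvw⟩ := hnt.exists_ne w
    exact ⟨v, hv, hvw⟩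
  have hwQ : w ∉ Q := fun h => heQ (hew.elim (fun h' => Or.inl (h' ▸ h)) fun h' => Or.inr (h' ▸ h))
  have huQ : u ∉ Q := fun h => hcQ (hcu.elim (fun h' => Or.inl (h' ▸ h)) fun h' => Or.inr (h' ▸ h))
  have hHQ : H \ (H \ Q) = Q := Set.sdiff_sdiff_cancel_left hQ.subset
  have hQne : Q.Nonempty := hQ.meets_left.elim (fun h => ⟨_, h⟩) fun h => ⟨_, h⟩
  obtain ⟨J, hJ, huJ, hwJ, hJl, hJl', ⟨x, hx⟩, y, hy⟩ := exists_split (K := H \ Q)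
    (fun v hv => hB.linked_diff_singleton hG v hv) Set.sdiff_subset (by rwa [hHQ]) hQ.linked_rest
    ⟨hwH, hwQ⟩ ⟨huH, huQ⟩ hwu
  rw [hHQ] at hx hy
  have hJ' : ∀ v ∈ J, v ∈ H ∧ v ∉ Q := fun v hv => hJ hv
  obtain ⟨s, hsQ, hs⟩ : ∃ s ∈ Q, x ∈ G.between {s} J := by
    rcases hx with hx | hx
    exacts [⟨_, hx.2, Or.inr ⟨hx.1, rfl⟩⟩, ⟨_, hx.1, Or.inl ⟨rfl, hx.2⟩⟩]
  obtain ⟨p, hpQ, hp⟩ : ∃ p ∈ Q, y ∈ G.between {p} ((H \ Q) \ J) := by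
    rcases hy with hy | hy
    exacts [⟨_, hy.2, Or.inr ⟨hy.1, rfl⟩⟩, ⟨_, hy.1, Or.inl ⟨rfl, hy.2⟩⟩]
  have hsp : s ≠ p := by
    rintro rfl
    have hxy : x = y := (hQ.existsUnique s hsQ).unique
      (by clear hB hbd ih hex; simp only [mem_between, Set.mem_sdiff, Set.mem_singleton_iff] at *; grind)
      (by clear hB hbd ih hex; simp only [mem_between, Set.mem_sdiff, Set.mem_singleton_iff] at *; grind)
    subst hxy
    clear hB hbd ih hex
    simp only [mem_between, Set.mem_sdiff, Set.mem_singleton_iff] at *; grind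
  obtain ⟨C, hsC, hCQ, hCl, hCl', -⟩ := exists_far_side hQ.linked (linkedBy_singleton Set.univ s)
    (by simpa using ⟨hsQ, hsp⟩ : {s} ⊆ Q \ {p}) hpQ
  have hCQ' : ∀ v ∈ C, v ∈ Q ∧ v ≠ p := fun v hv => hCQ hv
  have hsC : s ∈ C := hsC rfl
  obtain ⟨f, hf, hfc, hfQ, hfC⟩ : ∃ f ∈ G.cutEdges H, f ≠ c ∧ G.Meets f Q ∧ G.Meets f C := by
    by_contra! hcon
    have h4 := hcon a ha hca.symm hQ.meets_left
    have h5 := hcon g hQ.right_mem hcg.symm hQ.meets_right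
    have h6 := hQ.minimal (Q \ C) Set.sdiff_subset hCl'
      (hQ.meets_left.imp (fun h => ⟨h, fun h' => h4 (Or.inl h')⟩) fun h => ⟨h, fun h' => h4 (Or.inr h')⟩)
      (hQ.meets_right.imp (fun h => ⟨h, fun h' => h5 (Or.inl h')⟩) fun h => ⟨h, fun h' => h5 (Or.inr h')⟩)
    exact (h6.symm ▸ hsQ : s ∈ Q \ C).2 hsC
  have hK₀H : insert p ((H \ Q) \ J) ⊆ H :=
    Set.insert_subset (hQH p hpQ) fun v hv => hv.1.1
  obtain ⟨Q', g', hQ', hKQ'⟩ := exists_isStrip hG (K₀ := insert p ((H \ Q) \ J)) (M₀ := J ∪ C)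
    hF.linked (hJl'.insert trivial hp) ⟨p, Or.inl rfl⟩ hK₀H
    (by
      rintro v (hv | hv)
      · refine ⟨(hJ' v hv).1, ?_⟩
        rintro (rfl | h)
        exacts [(hJ' v hv).2 hpQ, h.2 hv]
      · refine ⟨hQH v (hCQ' v hv).1, ?_⟩
        rintro (rfl | h)
        exacts [(hCQ' v hv).2 rfl, h.1.2 (hCQ' v hv).1])
    hf ⟨hJl.union hCl (e := x) trivial (by
        clear hB hbd ih hex; simp only [mem_between, Set.mem_singleton_iff] at *; grind),
      hfC.imp Or.inr Or.inr, c, hc, hfc.symm, by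
        simp only [Meets, Set.mem_union]; grind⟩
    (fun U hU hUne _ => hB U (fun v hv => (hU hv).1) hUne
      ⟨p, hQH p hpQ, fun h => (hU h).2 (Or.inl rfl)⟩)
  have hwQ' : w ∉ Q' := (hKQ' (Or.inr ⟨⟨hwH, hwQ⟩, hwJ⟩)).2
  have hpQ' : p ∉ Q' := (hKQ' (Or.inl rfl)).2
  have hQH' : ∀ v ∈ Q', v ∈ H := hQ'.subset
  have heQ' : ¬ G.Meets e Q' := by
    clear hB hbd ih hex
    simp only [Meets, mem_cutEdges] at *; grind
  exact hF.manyBases_of_two_strips hG hq ih hQ hec heQ (Or.inr ⟨rfl, hbd⟩) hQ' hec heQ'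
    (Or.inr ⟨rfl, hbd⟩) hfQ (by rintro rfl; exact hpQ' hpQ)

theorem IsFrontier.manyBases [Fintype V] [Fintype E] (hG : G.IsCubicThreeEdgeConnected) {q : ℕ}
    (hq : ∀ C, G.IsCycle C → G.Peripheral C → C.ncard ≤ q) (hF : G.IsFrontier r H Y e) :
    G.ManyBases r (q - 1) H Y e := by
  induction hn : H.ncard using Nat.strong_induction_on generalizing H Y e with
  | _ n IH =>
    subst hn
    have ih : ∀ H' Y' e', H'.ncard < H.ncard → G.IsFrontier r H' Y' e' →
        G.ManyBases r (q - 1) H' Y' e' := fun H' Y' e' hlt hF' => IH _ hlt hF' rfl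
    rcases hF.boundary with ⟨rfl, h3⟩ | hbd
    · exact hF.manyBases_of_ncard_eq_three hG hq ih h3
    have h3 := hG.three_le_cut H hF.nonempty ⟨r, hF.root_notMem⟩
    by_cases h4 : (G.cutEdges H).ncard = 3
    · have hF₀ : G.IsFrontier r H ∅ e := ⟨hF.nonempty, hF.linked, hF.linked_compl, linkedBy_empty _,
        by simp, hF.root_notMem, by simp, hF.mem_cut, Or.inl ⟨rfl, h4⟩⟩
      exact (hF₀.manyBases_of_ncard_eq_three hG hq ih h4).mono fun B hB =>
        hB.of_empty hG hF.linked hF.linked_done hF.disjoint hF.root_notMem hF.root_notMem_done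
          hF.mem_cut hbd h3
    by_cases hB : G.Bridgeless H
    · exact hF.manyBases_of_bridgeless hG hq ih (by omega) hbd hB
    unfold Bridgeless at hB
    push Not at hB
    obtain ⟨D, hD, h1, h2, b, hb⟩ := hB
    by_cases heD : G.Meets e D
    · have hDD : H \ (H \ D) = D := Set.sdiff_sdiff_cancel_left hD
      refine hF.manyBases_of_bridge hG ih hbd (D := H \ D) Set.sdiff_subset h2 (by rwa [hDD])
        (b := b) (by rwa [hDD, between_comm]) ?_
      have := hF.mem_cut
      have hD' : ∀ v ∈ D, v ∈ H := hD
      simp only [Meets, mem_cutEdges, Set.mem_sdiff] at *; grind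
    · exact hF.manyBases_of_bridge hG ih hbd hD h1 h2 hb heD

end

theorem linkedBy_of_reaches {P : E → Prop} {S : Set V}
    (h : ∀ u ∈ S, ∀ v ∈ S, G.Reaches (fun e => P e ∧ G.src e ∈ S ∧ G.tgt e ∈ S) u v) :
    G.LinkedBy {e | P e} S := by
  rintro A hA ⟨u, hu⟩ ⟨v, hv, hvA⟩
  by_contra! hcon
  refine hvA ((h u (hA hu) v hv).mem_of_forall (fun e he hc => ?_) hu)
  have := hcon e he.1
  simp only [mem_between, mem_cutEdges, Set.mem_sdiff] at *
  grind

theorem LinkedBy.ncard_le [Finite V] [Finite E] {P : Set E} {S : Set V} (h : G.LinkedBy P S) :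
    S.ncard ≤ P.ncard + 1 := by
  rcases S.eq_empty_or_nonempty with rfl | ⟨u, hu⟩
  · simp
  obtain ⟨A, -, ⟨⟨hAS, hAne, hA⟩, hmax⟩⟩ := (Set.toFinite {A : Set V | A ⊆ S ∧ A.Nonempty ∧
    A.ncard ≤ (P ∩ G.inside A).ncard + 1}).exists_le_maximal
    (show {u} ∈ _ from ⟨by simpa, ⟨u, rfl⟩, by simp⟩)
  have hPA : (P ∩ G.inside A).ncard ≤ P.ncard := Set.ncard_le_ncard Set.inter_subset_left
  by_cases hSA : (S \ A).Nonempty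
  swap
  · rw [Set.not_nonempty_iff_eq_empty, Set.sdiff_eq_empty] at hSA
    rw [hSA.antisymm hAS]
    omega
  exfalso
  obtain ⟨t, htP, ht⟩ := h A hAS hAne hSA
  obtain ⟨v, hvS, hvA, hv⟩ : ∃ v ∈ S, v ∉ A ∧ t ∈ G.between {v} A := by
    rcases ht with ht | ht
    exacts [⟨_, ht.2.1, ht.2.2, Or.inr ⟨ht.1, rfl⟩⟩, ⟨_, ht.1.1, ht.1.2, Or.inl ⟨rfl, ht.2⟩⟩]
  have htA : t ∉ P ∩ G.inside A := by
    simp only [mem_between, mem_inside, Set.mem_inter_iff, Set.mem_singleton_iff] at *; grind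
  have hsub : Insert.insert t (P ∩ G.inside A) ⊆ P ∩ G.inside (Insert.insert v A) := by
    intro x hx
    simp only [mem_between, mem_inside, Set.mem_inter_iff, Set.mem_singleton_iff,
      Set.mem_insert_iff] at *
    grind
  have h1 := Set.ncard_le_ncard hsub
  rw [Set.ncard_insert_of_notMem htA] at h1
  have h2 := Set.ncard_insert_of_notMem hvA
  refine hvA (hmax (y := Insert.insert v A) ⟨Set.insert_subset hvS hAS, ⟨v, Or.inl rfl⟩, ?_⟩
    (Set.subset_insert v A) (Or.inl rfl))
  omega

theorem IsCycle.boundary_eq_zero [Fintype E] {C : Set E} (hC : G.IsCycle C) (w : V) :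
    G.boundary (fun e => if e ∈ C then 1 else 0) w = 0 := by
  rw [boundary_indicator]
  by_cases hw : G.touches C w
  · rw [hC.2.1 w hw]; rfl
  · have h1 : {e ∈ C | G.src e = w} = ∅ := by
      ext e; simpa using fun he h => hw ⟨e, he, Or.inl h⟩
    have h2 : {e ∈ C | G.tgt e = w} = ∅ := by
      ext e; simpa using fun he h => hw ⟨e, he, Or.inr h⟩
    simp [h1, h2]

/-- A cycle does not cross a cut exactly once. -/
theorem IsCycle.exists_ne_mem_cutEdges [Fintype V] [Fintype E] {C : Set E} (hC : G.IsCycle C)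
    {A : Set V} {e : E} (he : e ∈ C) (heA : e ∈ G.cutEdges A) :
    ∃ t ∈ C, t ≠ e ∧ t ∈ G.cutEdges A := by
  by_contra! hcon
  have h0 : ∑ w with w ∈ A, G.boundary (fun e => if e ∈ C then 1 else 0) w = 0 :=
    Finset.sum_eq_zero fun w _ => hC.boundary_eq_zero w
  have h1 : ∑ w with w ∈ A, G.boundary (fun e => if e ∈ C then 1 else 0) w =
      ∑ t, if t = e then 1 else 0 := by
    simp only [boundary]
    rw [Finset.sum_comm]
    refine Finset.sum_congr rfl fun t _ => ?_
    rw [← Finset.mul_sum, Finset.sum_add_distrib, Finset.sum_ite_eq, Finset.sum_ite_eq]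
    simp only [Finset.mem_filter, Finset.mem_univ, true_and]
    have h2 := hcon t
    simp only [mem_cutEdges] at h2 heA
    have h3 : (1 + 1 : ZMod 2) = 0 := rfl
    by_cases hte : t = e
    · subst hte
      rcases heA with h | h <;> simp [he, h.1, h.2]
    · by_cases htC : t ∈ C
      · by_cases hs : G.src t ∈ A <;> by_cases ht : G.tgt t ∈ A <;> simp_all
      · simp [htC, hte]
  rw [h1] at h0
  simp at h0

theorem isForest_of_linkedBy_univ [Fintype V] [Fintype E] {T : Set E} (hT : G.LinkedBy T Set.univ)
    (hcard : T.ncard + 1 ≤ Fintype.card V) : G.IsForest T := by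
  intro C hC hCT
  obtain ⟨e, he⟩ := hC.1
  have hlink : G.LinkedBy (T \ {e}) Set.univ := by
    intro A hA h1 h2
    obtain ⟨t, ht, htb⟩ := hT A hA h1 h2
    by_cases hte : t = e
    · subst hte
      obtain ⟨s, hs, hst, hsA⟩ := hC.exists_ne_mem_cutEdges (A := A) he (by
        simp only [mem_between, mem_cutEdges, Set.mem_sdiff, Set.mem_univ, true_and] at *; grind)
      refine ⟨s, ⟨hCT hs, hst⟩, ?_⟩
      simp only [mem_between, mem_cutEdges, Set.mem_sdiff, Set.mem_univ, true_and] at *; grind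
    · exact ⟨t, ⟨ht, hte⟩, htb⟩
  have h1 := hlink.ncard_le
  rw [Set.ncard_sdiff_singleton_of_mem (hCT he), Set.ncard_univ, Nat.card_eq_fintype_card] at h1
  have := (Set.ncard_pos).2 ⟨e, hCT he⟩
  omega

theorem Cubic.ncard_cutEdges_singleton [Finite E] (h : G.Cubic) (s : V) :
    (G.cutEdges {s}).ncard + 2 * {e | G.src e = s ∧ G.tgt e = s}.ncard = 3 := by
  have h1 : {e | G.src e = s}.ncard + {e | G.tgt e = s}.ncard = 3 := h s
  have h2 := Set.ncard_union_add_ncard_inter {e | G.src e = s} {e | G.tgt e = s}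
  have h3 : G.cutEdges {s} =
      ({e | G.src e = s} ∪ {e | G.tgt e = s}) \ ({e | G.src e = s} ∩ {e | G.tgt e = s}) := by
    ext e
    simp only [mem_cutEdges, Set.mem_singleton_iff, Set.mem_sdiff, Set.mem_union, Set.mem_inter_iff,
      Set.mem_ofPred_eq]
    tauto
  have h4 := Set.ncard_sdiff_add_ncard_of_subset (Set.inter_subset_left.trans
    Set.subset_union_left : {e | G.src e = s} ∩ {e | G.tgt e = s} ⊆
      {e | G.src e = s} ∪ {e | G.tgt e = s})
  have h5 : {e | G.src e = s ∧ G.tgt e = s} = {e | G.src e = s} ∩ {e | G.tgt e = s} := rfl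
  rw [h3, h5]
  omega

theorem ThreeConnected.linked [Fintype V] (h : G.ThreeConnected) (u v : V) :
    G.Linked {w | w ≠ u ∧ w ≠ v} :=
  (linkedBy_of_reaches (P := fun _ => True) (h.2.2 u v)).mono (Set.subset_univ _)

/-- Two vertices meeting all edges of a cut exhaust one of its sides. -/
theorem ThreeConnected.exists_mem_cutEdges [Fintype V] (h : G.ThreeConnected) (u v : V) {S : Set V}
    (h1 : (S \ {u, v}).Nonempty) (h2 : (Sᶜ \ {u, v}).Nonempty) :
    ∃ e ∈ G.cutEdges S, G.src e ≠ u ∧ G.src e ≠ v ∧ G.tgt e ≠ u ∧ G.tgt e ≠ v := by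
  obtain ⟨e, -, he⟩ := h.linked u v (S \ {u, v}) (by
    intro x hx
    simp only [Set.mem_sdiff, Set.mem_insert_iff, Set.mem_singleton_iff, Set.mem_ofPred_eq] at *
    tauto) h1 (h2.mono (by
    intro x hx
    simp only [Set.mem_sdiff, Set.mem_insert_iff, Set.mem_singleton_iff, Set.mem_ofPred_eq,
      Set.mem_compl_iff] at *
    tauto))
  refine ⟨e, ?_⟩
  simp only [mem_between, mem_cutEdges, Set.mem_sdiff, Set.mem_insert_iff, Set.mem_singleton_iff,
    Set.mem_ofPred_eq] at *
  tauto

theorem ThreeConnected.ncard_cutEdges_singleton [Fintype V] [Finite E] (h : G.ThreeConnected)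
    (hc : G.Cubic) (s : V) : (G.cutEdges {s}).ncard = 3 := by
  have h1 := hc.ncard_cutEdges_singleton s
  by_contra hne
  have h2 : (G.cutEdges {s}).ncard ≤ 1 := by omega
  obtain ⟨u, hus, hu⟩ : ∃ u ≠ s, ∀ e ∈ G.cutEdges {s}, G.src e = u ∨ G.tgt e = u := by
    rcases (G.cutEdges {s}).eq_empty_or_nonempty with h3 | ⟨e, he⟩
    · obtain ⟨u, hu⟩ := Fintype.exists_ne_of_one_lt_card (by have := h.1; omega) s
      exact ⟨u, hu, by simp [h3]⟩
    · have h4 := fun t ht => (Set.ncard_le_one).1 h2 t ht e he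
      simp only [mem_cutEdges, Set.mem_singleton_iff] at he
      rcases he with ⟨h5, h6⟩ | ⟨h5, h6⟩
      · exact ⟨_, h6, fun t ht => by rw [h4 t ht]; exact Or.inr rfl⟩
      · exact ⟨_, h5, fun t ht => by rw [h4 t ht]; exact Or.inl rfl⟩
  obtain ⟨e, he, h3, -, h4, -⟩ := h.exists_mem_cutEdges u u (S := {s}) ⟨s, rfl, by simpa using hus.symm⟩ (by
    obtain ⟨w, hw⟩ := Finset.exists_mem_notMem_of_card_lt_card (s := {s, u}) (t := Finset.univ) (by
      have := h.1
      have := Finset.card_le_two (a := s) (b := u)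
      rw [Finset.card_univ]; omega)
    refine ⟨w, ?_⟩
    simpa using hw)
  exact (hu e he).elim h3 h4

theorem ThreeConnected.isCubicThreeEdgeConnected [Fintype V] [Finite E] (h : G.ThreeConnected)
    (hc : G.Cubic) : G.IsCubicThreeEdgeConnected := by
  have hloop : ∀ e, G.src e ≠ G.tgt e := by
    intro e he
    have h1 := hc.ncard_cutEdges_singleton (G.src e)
    rw [h.ncard_cutEdges_singleton hc] at h1
    have := (Set.ncard_pos).2 (⟨e, rfl, he.symm⟩ : {t | G.src t = G.src e ∧ G.tgt t = G.src e}.Nonempty)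
    omega
  refine ⟨hloop, fun v => ?_, fun S h1 h2 => ?_⟩
  · rw [← h.ncard_cutEdges_singleton hc v]
    congr 1
    ext e
    have := hloop e
    simp only [mem_cutEdges, Set.mem_singleton_iff, Set.mem_ofPred_eq]
    grind
  · rcases h1.exists_eq_singleton_or_nontrivial with ⟨s, rfl⟩ | hS
    · exact (h.ncard_cutEdges_singleton hc s).ge
    rcases h2.exists_eq_singleton_or_nontrivial with ⟨s, hs⟩ | hS'
    · rw [← cutEdges_compl, hs]
      exact (h.ncard_cutEdges_singleton hc s).ge
    by_contra! hlt
    obtain ⟨u, hu, v, hv, huv⟩ : ∃ u ∈ S, ∃ v ∈ Sᶜ, ∀ e ∈ G.cutEdges S,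
        G.src e = u ∨ G.src e = v ∨ G.tgt e = u ∨ G.tgt e = v := by
      have hends : ∀ e ∈ G.cutEdges S, (∃ u ∈ S, G.src e = u ∨ G.tgt e = u) ∧
          ∃ v ∈ Sᶜ, G.src e = v ∨ G.tgt e = v := fun e he =>
        ⟨exists_end_of_mem_cutEdges he, exists_end_of_mem_cutEdges (by rwa [cutEdges_compl])⟩
      rcases (G.cutEdges S).eq_empty_or_nonempty with h3 | ⟨a, ha⟩
      · obtain ⟨u, hu⟩ := h1
        obtain ⟨v, hv⟩ := h2
        exact ⟨u, hu, v, hv, by simp [h3]⟩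
      · obtain ⟨⟨u, hu, hau⟩, v₀, hv₀, -⟩ := hends a ha
        by_cases hb : ∃ b ∈ G.cutEdges S, b ≠ a
        · obtain ⟨b, hb, hba⟩ := hb
          obtain ⟨-, v, hv, hbv⟩ := hends b hb
          refine ⟨u, hu, v, hv, fun e he => ?_⟩
          have : e = a ∨ e = b := by
            by_contra! hcon
            have h3 : ({e, a, b} : Set E) ⊆ G.cutEdges S := by
              rintro x (rfl | rfl | rfl) <;> assumption
            have h4 := Set.ncard_le_ncard h3
            rw [Set.ncard_insert_of_notMem (by simpa using hcon), Set.ncard_pair hba.symm] at h4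
            omega
          rcases this with rfl | rfl <;> tauto
        · push Not at hb
          refine ⟨u, hu, v₀, hv₀, fun e he => ?_⟩
          rw [hb e he]
          tauto
    obtain ⟨x, hx, hxu⟩ := hS.exists_ne u
    obtain ⟨y, hy, hyv⟩ := hS'.exists_ne v
    obtain ⟨e, he, h3⟩ := h.exists_mem_cutEdges u v
      ⟨x, hx, by
        rintro (rfl | rfl)
        exacts [hxu rfl, hv hx]⟩
      ⟨y, hy, by
        rintro (rfl | rfl)
        exacts [hy hu, hyv rfl]⟩
    have := huv e he
    tauto

theorem Reaches.deleteVertex {r : V} {P : E → Prop} (hP : ∀ e, P e → G.src e ≠ r ∧ G.tgt e ≠ r)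
    {u v : V} (h : G.Reaches P u v) (hu : u ≠ r) :
    ∃ hv : v ≠ r, (G.deleteVertex r).Reaches (fun e => P e.1) ⟨u, hu⟩ ⟨v, hv⟩ := by
  induction h with
  | refl => exact ⟨hu, Relation.ReflTransGen.refl⟩
  | tail _ hbc ih =>
    obtain ⟨hb, ih⟩ := ih
    obtain ⟨e, he, ⟨rfl, rfl⟩ | ⟨rfl, rfl⟩⟩ := hbc
    · exact ⟨(hP e he).2, ih.tail ⟨⟨e, hP e he⟩, he, Or.inl ⟨rfl, rfl⟩⟩⟩
    · exact ⟨(hP e he).1, ih.tail ⟨⟨e, hP e he⟩, he, Or.inr ⟨rfl, rfl⟩⟩⟩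

theorem IsCycle.deleteVertex {r : V} {C : Set E} (hC : G.IsCycle C) (hr : ¬ G.touches C r) :
    (G.deleteVertex r).IsCycle (Subtype.val ⁻¹' C) := by
  have hP : ∀ e, e ∈ C → G.src e ≠ r ∧ G.tgt e ≠ r := fun e he =>
    ⟨fun h => hr ⟨e, he, Or.inl h⟩, fun h => hr ⟨e, he, Or.inr h⟩⟩
  have htouch : ∀ v : {v // v ≠ r}, (G.deleteVertex r).touches (Subtype.val ⁻¹' C) v →
      G.touches C v.1 := by
    rintro v ⟨e, he, rfl | rfl⟩
    exacts [⟨e.1, he, Or.inl rfl⟩, ⟨e.1, he, Or.inr rfl⟩]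
  refine ⟨?_, fun v hv => ?_, fun u v hu hv => ?_⟩
  · obtain ⟨e, he⟩ := hC.1
    exact ⟨⟨e, hP e he⟩, he⟩
  · rw [← hC.2.1 v.1 (htouch v hv)]
    congr 1
    · rw [← Set.ncard_preimage_of_injective_subset_range Subtype.val_injective (s := {e ∈ C | G.src e = v.1})
        (by rintro e ⟨he, -⟩; exact ⟨⟨e, hP e he⟩, rfl⟩)]
      congr 1
      ext e
      exact and_congr_right fun _ => Subtype.ext_iff
    · rw [← Set.ncard_preimage_of_injective_subset_range Subtype.val_injective (s := {e ∈ C | G.tgt e = v.1})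
        (by rintro e ⟨he, -⟩; exact ⟨⟨e, hP e he⟩, rfl⟩)]
      congr 1
      ext e
      exact and_congr_right fun _ => Subtype.ext_iff
  · exact ((hC.2.2 u v (htouch u hu) (htouch v hv)).deleteVertex hP u.2).2

theorem Closed.closedAvoiding {r : V} {R : Set {e : E // G.src e ≠ r ∧ G.tgt e ≠ r}}
    (hR : (G.deleteVertex r).Closed 2 R) : G.ClosedAvoiding r (Subtype.val '' R) := by
  intro C hC hr hne
  have hP : ∀ e, e ∈ C → G.src e ≠ r ∧ G.tgt e ≠ r := fun e he =>
    ⟨fun h => hr ⟨e, he, Or.inl h⟩, fun h => hr ⟨e, he, Or.inr h⟩⟩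
  have hpre : Subtype.val ⁻¹' (C \ Subtype.val '' R) = (Subtype.val ⁻¹' C) \ R := by
    rw [Set.preimage_sdiff, Set.preimage_image_eq _ Subtype.val_injective]
  rw [← Set.ncard_preimage_of_injective_subset_range Subtype.val_injective
    (by rintro e ⟨he, -⟩; exact ⟨⟨e, hP e he⟩, rfl⟩), hpre]
  refine hR _ (hC.deleteVertex hr) ?_
  rw [← hpre]
  obtain ⟨e, he⟩ := hne
  exact ⟨⟨e, hP e he.1⟩, he⟩

theorem IsPartialBase.deleteVertex [Fintype V] [Fintype E] {r : V} {e : E} {B : Set E}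
    (hne : ∃ v, v ≠ r) (he : e ∈ G.cutEdges {r}ᶜ) (h : G.IsPartialBase r {r}ᶜ ∅ e B) :
    (G.deleteVertex r).IsBase 2 (Subtype.val ⁻¹' B) ∧
      (G.deleteVertex r).ConnectedVia (fun e => e ∉ Subtype.val ⁻¹' B) ∧
      (G.deleteVertex r).IsForest (Subtype.val ⁻¹' B)ᶜ := by
  have hP : ∀ t, t ∈ G.inside {r}ᶜ \ B → G.src t ≠ r ∧ G.tgt t ≠ r := fun t ht => ht.1
  have hconn : (G.deleteVertex r).ConnectedVia (fun e => e ∉ Subtype.val ⁻¹' B) := by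
    obtain ⟨v, hv⟩ := hne
    refine ⟨⟨⟨v, hv⟩⟩, fun u v => ?_⟩
    obtain ⟨_, h1⟩ := (h.linked.reaches (u := u.1) (v := v.1) u.2 v.2).deleteVertex hP u.2
    refine Relation.ReflTransGen.mono ?_ _ _ h1
    rintro a b ⟨t, ht, hab⟩
    exact ⟨t, ht.2, hab⟩
  refine ⟨?_, hconn, isForest_of_linkedBy_univ ?_ ?_⟩
  · refine Set.eq_univ_of_forall fun x R ⟨hBR, hR⟩ => ?_
    obtain ⟨y, hy, hyx⟩ := h.closure _ hR.closedAvoiding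
      (fun t ht => ⟨⟨t, h.subset ht⟩, hBR ht, rfl⟩) (by rintro _ ⟨⟨⟩, _⟩)
      (⟨⟨Or.inl x.2.1, Or.inl x.2.2⟩, by
        have := x.2
        rintro hxe
        rw [Set.mem_singleton_iff] at hxe
        rw [hxe] at this
        simp only [mem_cutEdges, Set.mem_compl_iff, Set.mem_singleton_iff] at he
        tauto⟩ : x.1 ∈ G.inside ({r}ᶜ ∪ ∅) \ {e})
    rwa [← Subtype.ext hyx]
  · exact linkedBy_of_reaches (P := fun e => e ∉ Subtype.val ⁻¹' B) (by simpa using hconn.2)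
  · have h1 : (Subtype.val ⁻¹' B : Set {e : E // G.src e ≠ r ∧ G.tgt e ≠ r})ᶜ =
        Subtype.val ⁻¹' (G.inside {r}ᶜ \ B) := by
      ext t
      exact ⟨fun ht => ⟨t.2, ht⟩, fun ht => ht.2⟩
    rw [h1, Set.ncard_preimage_of_injective_subset_range Subtype.val_injective
      (by rintro t ht; exact ⟨⟨t, hP t ht⟩, rfl⟩), h.ncard, ← Nat.card_eq_fintype_card]
    exact le_of_eq rfl

theorem Cubic.two_mul_card [Fintype V] [Fintype E] (h : G.Cubic) :
    2 * Fintype.card E = 3 * Fintype.card V := by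
  have hsum : ∀ φ : E → V, ∑ v, {e | φ e = v}.ncard = Fintype.card E := by
    intro φ
    rw [← Finset.card_univ, Finset.card_eq_sum_card_fiberwise (f := φ) (t := Finset.univ) (by simp)]
    refine Finset.sum_congr rfl fun v _ => ?_
    rw [Set.ncard_eq_toFinset_card', Set.toFinset_ofPred]
  have : ∑ v, G.degree v = Fintype.card E + Fintype.card E := by
    simp only [degree, Finset.sum_add_distrib, hsum]
  rw [Finset.sum_congr rfl fun v _ => h v, Finset.sum_const, Finset.card_univ, smul_eq_mul] at this
  omega

end Multigraph

/-- Let `G` be a 3-connected cubic graph on `n` vertices with a root `r`. If every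
peripheral cycle of `G` has length at most `q`, then `G − r` has at least `2^(n/(2q))`
decompositions of its edge set into (the edge set of) a spanning tree and a 2-base;
such a decomposition is recorded by the 2-base `B`, whose complement is required to be
the edge set of a spanning tree (connected, spanning and acyclic). -/
theorem many_tree_two_base_decompositions {V E : Type} [Fintype V] [Fintype E]
    (G : Multigraph V E) (hG : G.ThreeConnected) (hcubic : G.Cubic) (r : V) (q : ℕ)
    (hper : ∀ C : Set E, G.IsCycle C → G.Peripheral C → C.ncard ≤ q) :
    (2 : ℝ) ^ ((Fintype.card V : ℝ) / (2 * (q : ℝ))) ≤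
      Nat.card {B : Set {e : E // G.src e ≠ r ∧ G.tgt e ≠ r} //
        (G.deleteVertex r).IsBase 2 B ∧
        (G.deleteVertex r).ConnectedVia (fun e => e ∉ B) ∧
        (G.deleteVertex r).IsForest Bᶜ} := by
  have hC := hG.isCubicThreeEdgeConnected hcubic
  have h4 := hG.1
  obtain ⟨v, hv⟩ := Fintype.exists_ne_of_one_lt_card (by omega) r
  have hcut : (G.cutEdges {r}ᶜ).ncard = 3 := by
    rw [Multigraph.cutEdges_compl, hG.ncard_cutEdges_singleton hcubic]
  obtain ⟨e, he⟩ := Set.nonempty_of_ncard_ne_zero (by omega : (G.cutEdges {r}ᶜ).ncard ≠ 0)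
  have hF : G.IsFrontier r {r}ᶜ ∅ e := by
    refine ⟨⟨v, hv⟩, ?_, ?_, Multigraph.linkedBy_empty _, by simp, by simp, by simp, he,
      Or.inl ⟨rfl, hcut⟩⟩
    · have := hG.linked r r
      simp only [and_self] at this
      exact this
    · rw [compl_compl]
      exact Multigraph.linkedBy_singleton _ r
  obtain ⟨k, hk, hcard⟩ := hF.manyBases hC hper
  have hinside : (G.inside {r}ᶜ).ncard + 3 = Fintype.card E := by
    have h1 : (G.inside {r}ᶜ)ᶜ = {e | G.src e = r ∨ G.tgt e = r} := by
      ext t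
      simp only [Multigraph.mem_inside, Set.mem_compl_iff, Set.mem_singleton_iff, Set.mem_ofPred_eq]
      tauto
    have h2 := Set.ncard_add_ncard_compl (G.inside {r}ᶜ)
    rwa [h1, hC.ncard_incident r, Nat.card_eq_fintype_card] at h2
  have hverts : ({r}ᶜ : Set V).ncard + 1 = Fintype.card V := by
    have h2 := Set.ncard_add_ncard_compl {r}
    rw [Set.ncard_singleton, Nat.card_eq_fintype_card] at h2
    omega
  have hdeg := hcubic.two_mul_card
  have hn : Fintype.card V ≤ 2 * (k * (q - 1)) + 2 := by omega
  have hk0 : k ≠ 0 := by rintro rfl; omega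
  have hq0 : q - 1 ≠ 0 := fun h => by rw [h] at hn; omega
  have hkq : Fintype.card V ≤ k * (2 * q) := by
    obtain ⟨p, rfl⟩ : ∃ p, q = p + 1 := ⟨q - 1, by omega⟩
    rw [Nat.add_sub_cancel] at hn
    nlinarith [Nat.one_le_iff_ne_zero.2 hk0]
  have hexp : (Fintype.card V : ℝ) / (2 * (q : ℝ)) ≤ k := by
    rw [div_le_iff₀ (by have : 0 < q := by omega
                        positivity)]
    exact_mod_cast hkq
  refine (Real.rpow_le_rpow_of_exponent_le one_le_two hexp).trans ?_
  rw [Real.rpow_natCast]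
  have hfinal : 2 ^ k ≤ Nat.card {B : Set {e : E // G.src e ≠ r ∧ G.tgt e ≠ r} //
      (G.deleteVertex r).IsBase 2 B ∧ (G.deleteVertex r).ConnectedVia (fun e => e ∉ B) ∧
      (G.deleteVertex r).IsForest Bᶜ} := by
    refine hk.trans ?_
    refine (Set.ncard_le_ncard_of_injOn (fun B => (Subtype.val ⁻¹' B : Set _))
      (fun B hB => hB.deleteVertex ⟨v, hv⟩ he) ?_ (Set.toFinite _)).trans
      (Nat.card_coe_set_eq _).ge
    intro B hB B' hB' heq
    have himage : ∀ A, G.IsPartialBase r {r}ᶜ ∅ e A → Subtype.val ''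
        (Subtype.val ⁻¹' A : Set {e : E // G.src e ≠ r ∧ G.tgt e ≠ r}) = A := fun A hA =>
      Set.image_preimage_eq_of_subset fun t ht => ⟨⟨t, hA.subset ht⟩, rfl⟩
    rw [← himage B hB, ← himage B' hB']
    exact congrArg _ heq
  exact_mod_cast hfinal
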